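/- Let m = 2. Fix integers w ≥ 2 and d ≥ 4w+1. Take distinct lines L_1, L_2 ⊂ ℙ^2 and set {O} := L_1 ∩ L_2. Let A_1 ⊂ L_1 be the degree-(w+1) effective divisor of L_1 supported at O. Fix O_2 ∈ L_2 ∖ {O} and let A_2 ⊂ L_2 be the degree-w effective divisor of L_2 supported at O_2. Set A := A_1 ∪ A_2. Then for every P ∈ ⟨ν_d(A)⟩ with P ∉ ⟨ν_d(A')⟩ for any A' ⊊ A, one has br(P) = 2w+1 and sr(P) ≥ 2d+2−2w; moreover, there exists such a P with sr(P) = 2d+2−2w. -/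

import Mathlib

open scoped LinearAlgebra.Projectivization

noncomputable section

/-- The polynomial ring in `m+1` variables over `K`: homogeneous coordinate ring of `ℙ^m`. -/
abbrev PR (K : Type) [Field K] (m : ℕ) : Type := MvPolynomial (Fin (m+1)) K

/-- The space of degree-`d` forms in `m+1` variables. -/
abbrev Hd (K : Type) [Field K] (m d : ℕ) : Submodule K (PR K m) :=
  MvPolynomial.homogeneousSubmodule (Fin (m+1)) K d

/-- Projective `m`-space over `K`. -/
abbrev Pm (K : Type) [Field K] (m : ℕ) := ℙ K (Fin (m+1) → K)

/-- The target projective space `ℙ^n`, `n = C(m+d,m) - 1`, of the degree-`d` Veronese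
embedding, realized as the projectivization of the dual of the space of degree-`d` forms
(the space of degree-`d` symmetric tensors). -/
abbrev PN (K : Type) [Field K] (m d : ℕ) := ℙ K (Module.Dual K (Hd K m d))

variable {K : Type} [Field K] {m : ℕ}

/-- Hilbert function of `R/I` in degree `t`. -/
def hilbQ (I : Ideal (PR K m)) (t : ℕ) : ℕ :=
  Module.finrank K ((Hd K m t).map (Ideal.Quotient.mkₐ K I).toLinearMap)

/-- The degree (length) of the projective scheme defined by `I`: the eventual value of the
Hilbert function of `R/I`. -/
def idealDeg (I : Ideal (PR K m)) : ℕ := Filter.limsup (fun t => hilbQ I t) Filter.atTop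

/-- `h^1(𝓘_Z(d))` for the zero-dimensional scheme `Z` with (saturated) ideal `I`:
it equals `deg Z - dim (R/I)_d`. -/
def h1I (I : Ideal (PR K m)) (d : ℕ) : ℕ := idealDeg I - hilbQ I d

/-- An ideal is homogeneous. -/
def IsHomogI (I : Ideal (PR K m)) : Prop :=
  ∀ f ∈ I, ∀ n : ℕ, MvPolynomial.homogeneousComponent n f ∈ I

/-- An ideal is saturated with respect to the irrelevant maximal ideal. -/
def IsSatI (I : Ideal (PR K m)) : Prop :=
  ∀ f : PR K m, (∀ i, MvPolynomial.X i * f ∈ I) → f ∈ I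

/-- A closed subscheme of `ℙ^m`, given by its saturated homogeneous ideal. -/
structure PSub (K : Type) [Field K] (m : ℕ) where
  I : Ideal (PR K m)
  homog : IsHomogI I
  sat : IsSatI I

/-- A (closed sub)scheme is zero-dimensional iff the Hilbert function of `R/I` is bounded. -/
def IsZeroDimI (I : Ideal (PR K m)) : Prop := ∃ C, ∀ t, hilbQ I t ≤ C

/-- A polynomial vanishes at a projective point (every homogeneous component vanishes
at a representative). -/
def vanishesAt (f : PR K m) (a : Pm K m) : Prop :=
  ∀ n : ℕ, MvPolynomial.eval a.rep (MvPolynomial.homogeneousComponent n f) = 0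

/-- Zero locus of an ideal in `ℙ^m`. -/
def pzeroLocus (I : Ideal (PR K m)) : Set (Pm K m) := {a | ∀ f ∈ I, vanishesAt f a}

/-- The (saturated) homogeneous ideal of a set of points of `ℙ^m`. -/
def idealOfSet (S : Set (Pm K m)) : Ideal (PR K m) :=
  Ideal.span {f : PR K m | (∃ n, f.IsHomogeneous n) ∧ ∀ a ∈ S, MvPolynomial.eval a.rep f = 0}

/-- Saturation of a homogeneous ideal: the smallest saturated homogeneous ideal containing it. -/
def satIdeal (J : Ideal (PR K m)) : Ideal (PR K m) := sInf {J' | J ≤ J' ∧ IsHomogI J' ∧ IsSatI J'}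

/-- The scheme defined by the (saturated) ideal `I` is reduced. -/
def IsReducedI (I : Ideal (PR K m)) : Prop := I = idealOfSet (pzeroLocus I)

/-- Connected component of a zero-dimensional scheme at a point `a`: the largest subscheme
supported at `a`, i.e. the `a`-primary component. -/
def componentAt (I : Ideal (PR K m)) (a : Pm K m) : Ideal (PR K m) :=
  sInf {J | I ≤ J ∧ IsHomogI J ∧ IsSatI J ∧ pzeroLocus J ⊆ {a}}

/-- Residual scheme of `Z` with respect to the hypersurface `f = 0`: the colon ideal `(I_Z : f)`. -/
def resIdeal (I : Ideal (PR K m)) (f : PR K m) : Ideal (PR K m) :=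
  Submodule.colon I (Ideal.span {f})

/-- Degree of the scheme-theoretic intersection of the subschemes defined by `I` and `J`. -/
def interDeg (I J : Ideal (PR K m)) : ℕ := idealDeg (I ⊔ J)

/-- The degree-`d` Veronese image of a vector `v`: the evaluation-at-`v` functional on
degree-`d` forms. -/
def nu (d : ℕ) (v : Fin (m+1) → K) : Module.Dual K (Hd K m d) :=
  (MvPolynomial.aeval v).toLinearMap ∘ₗ (Hd K m d).subtype

/-- The linear span of the Veronese image `ν_d(S)` of a set `S` of points of `ℙ^m`. -/
def dualSpan (d : ℕ) (S : Set (Pm K m)) : Submodule K (Module.Dual K (Hd K m d)) :=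
  Submodule.span K ((fun a => nu d a.rep) '' S)

/-- The linear span `⟨ν_d(Z)⟩` of the Veronese image of the subscheme with ideal `I`:
the annihilator of the degree-`d` part of `I`. -/
def schemeSpanSub (I : Ideal (PR K m)) (d : ℕ) : Submodule K (Module.Dual K (Hd K m d)) where
  carrier := {φ | ∀ f : Hd K m d, (f : PR K m) ∈ I → φ f = 0}
  add_mem' := by
    intro a b ha hb f hf
    simp [LinearMap.add_apply, ha f hf, hb f hf]
  zero_mem' := by intro f hf; simp
  smul_mem' := by
    intro c a ha f hf
    simp [LinearMap.smul_apply, ha f hf]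

/-- `P ∈ ⟨ν_d(Z)⟩`, for `Z` the subscheme with ideal `I`. -/
def inSpanI (I : Ideal (PR K m)) (d : ℕ) (P : PN K m d) : Prop := P.rep ∈ schemeSpanSub I d

/-- `P ∈ ⟨ν_d(S)⟩` for a set `S` of points of `ℙ^m`. -/
def inSpanSet (d : ℕ) (S : Set (Pm K m)) (P : PN K m d) : Prop := P.rep ∈ dualSpan d S

/-- `L` is a linear subspace of `ℙ^m`. -/
def IsLinearSub (L : Set (Pm K m)) : Prop :=
  ∃ W : Submodule K (Fin (m+1) → K), L = {a | a.submodule ≤ W}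

/-- `L` is a line of `ℙ^m`. -/
def IsLine (L : Set (Pm K m)) : Prop :=
  ∃ W : Submodule K (Fin (m+1) → K), Module.finrank K W = 2 ∧ L = {a | a.submodule ≤ W}

/-- `L` is a plane of `ℙ^m`. -/
def IsPlane (L : Set (Pm K m)) : Prop :=
  ∃ W : Submodule K (Fin (m+1) → K), Module.finrank K W = 3 ∧ L = {a | a.submodule ≤ W}

/-- `J` is the (saturated homogeneous) ideal of a conic of `ℙ^m`: a degree-2 curve contained
in a plane (possibly reducible). -/
def IsConic (J : Ideal (PR K m)) : Prop :=
  ∃ (W : Submodule K (Fin (m+1) → K)) (q : PR K m),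
    Module.finrank K W = 3 ∧ q.IsHomogeneous 2 ∧
    q ∉ idealOfSet {a : Pm K m | a.submodule ≤ W} ∧
    J = satIdeal (idealOfSet {a : Pm K m | a.submodule ≤ W} ⊔ Ideal.span {q})

/-- The algebra of polynomial functions on a `K`-vector space. -/
def polyFunctions (K V : Type) [Field K] [AddCommGroup V] [Module K V] : Subalgebra K (V → K) :=
  Algebra.adjoin K {g : V → K | ∃ φ : V →ₗ[K] K, g = ⇑φ}

/-- Zariski closure of a subset of a projective space. -/
def zClosure {V : Type} [AddCommGroup V] [Module K V] (T : Set (ℙ K V)) : Set (ℙ K V) :=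
  {P | ∀ F ∈ polyFunctions K V, (∀ Q ∈ T, ∀ c : K, F (c • Q.rep) = 0) →
    ∀ c : K, F (c • P.rep) = 0}

/-- The Veronese variety `X_{m,d} = ν_d(ℙ^m)` as a subset of `PN K m d`. -/
def XSet (K : Type) [Field K] (m d : ℕ) : Set (PN K m d) :=
  {Q | ∃ a : Pm K m, Q.submodule = Submodule.span K {nu d a.rep}}

/-- The image `ν_d(S)` of a set of points of `ℙ^m`, as a subset of `PN K m d`. -/
def nuSet (d : ℕ) (S : Set (Pm K m)) : Set (PN K m d) :=
  {Q | ∃ a ∈ S, Q.submodule = Submodule.span K {nu d a.rep}}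

/-- The rank of a point `P` of `PN` with respect to a subset `Y ⊆ PN`. -/
def rankWrt {m d : ℕ} (Y : Set (PN K m d)) (P : PN K m d) : ℕ :=
  sInf {r | ∃ S : Finset (PN K m d), ↑S ⊆ Y ∧ S.card = r ∧
    P.rep ∈ Submodule.span K (Projectivization.rep '' (S : Set (PN K m d)))}

/-- The `s`-th secant variety of `Y ⊆ PN`: the Zariski closure of the union of the spans
of `s` points of `Y`. -/
def secantWrt {m d : ℕ} (Y : Set (PN K m d)) (s : ℕ) : Set (PN K m d) :=
  zClosure {Q | ∃ S : Finset (PN K m d), ↑S ⊆ Y ∧ S.card ≤ s ∧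
    Q.rep ∈ Submodule.span K (Projectivization.rep '' (S : Set (PN K m d)))}

/-- The border rank of `P` with respect to `Y ⊆ PN`. -/
def brankWrt {m d : ℕ} (Y : Set (PN K m d)) (P : PN K m d) : ℕ :=
  sInf {s | 0 < s ∧ P ∈ secantWrt Y s}

/-- Symmetric rank. -/
def srank {m : ℕ} (d : ℕ) (P : PN K m d) : ℕ := rankWrt (XSet K m d) P

/-- Border rank. -/
def brank {m : ℕ} (d : ℕ) (P : PN K m d) : ℕ := brankWrt (XSet K m d) P

/-- Cactus rank: minimal degree of a zero-dimensional closed subscheme `E ⊂ ℙ^m` with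
`P ∈ ⟨ν_d(E)⟩`. -/
def crank {m : ℕ} (d : ℕ) (P : PN K m d) : ℕ :=
  sInf {c | ∃ Z : PSub K m, IsZeroDimI Z.I ∧ idealDeg Z.I = c ∧ inSpanI Z.I d P}

/-- `σ_{s,r}(X_{m,d})`. -/
def sigmaSet (K : Type) [Field K] (m d s r : ℕ) : Set (PN K m d) :=
  {P | brank d P = s ∧ srank d P = r}

/-- A property `Φ` holds for a general `k`-tuple of points of the linear subspace of `ℙ^m`
determined by `W`. -/
def GenerallyOn (W : Submodule K (Fin (m+1) → K)) (k : ℕ)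
    (Φ : (Fin k → Pm K m) → Prop) : Prop :=
  ∃ w : Fin 3 → W, Submodule.span K (Set.range fun j => (w j : Fin (m+1) → K)) = W ∧
    ∃ F : MvPolynomial (Fin k × Fin 3) K, F ≠ 0 ∧
      ∀ c : Fin k → Fin 3 → K,
        MvPolynomial.eval (fun p => c p.1 p.2) F ≠ 0 →
        ∀ e : Fin k → Pm K m,
          (∀ i, (e i).submodule = Submodule.span K {∑ j, c i j • (w j : Fin (m+1) → K)}) → Φ e

end

/-!
Put `p + 1 = deg A₁`, `r + 1 = deg A₂`, and choose a basis `B` of `K³` with `B 0` over `O`, `B 1` on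
`L₁` and `B 2` over `O₂`. A point of `⟨ν_d(A)⟩` is a sum of two jets,
`f ↦ ∑ k ≤ p, α k [tᵏ] f(B 0 + t B 1) + ∑ k ≤ r, β k [tᵏ] f(B 2 + t B 0)`, and it lies in the span
of no smaller scheme exactly when `α p ≠ 0` and `β r ≠ 0`.

*Border rank.* A jet of length `n` is a limit of combinations of `n` points of its line, so the
border rank is at most `p + r + 2`; a catalecticant minor of that size, with determinant
`α p ^ (p + 1) * β r ^ (r + 1)`, shows that it is no less.

*Upper bound for the rank.* A combination of `d - p` points `ν_d(B 0 + s B 1)` whose moments of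
orders `p < i < d` vanish is a jet of order `p` at `B 0` plus a multiple of `ν_d(B 1)`. Similarly
`d - r` points of `L₂` give a jet of order `r` at `B 2` plus a multiple of `ν_d(B 0)`, which the
first jet absorbs. Together with `B 1` this makes `2 d + 1 - p - r` points.

*Lower bound for the rank.* Both jets vanish on multiples of the equation of `L₁ ∪ L₂`, so the
points of a decomposition off `L₁ ∪ L₂` satisfy a linear relation in degree `d - 2`. If there are
any, either there are at least `2 (d - 2) + 2` of them, or `d` of them lie on a line `D`. As `D`
misses `B 0` or `B 2`, multiples of the equation of `D` still see the order of one of the jets,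
which forces enough points off `D`. If all points lie on `L₁ ∪ L₂`, those off `L₁` and those off
`L₂` can be counted separately.
-/

noncomputable section

open MvPolynomial

variable {K : Type} [Field K] {m : ℕ}

theorem aeval_mul_of_isHomogeneous {S : Type*} [CommRing S] [Algebra K S] {f : PR K m} {n : ℕ}
    (hf : f.IsHomogeneous n) (y : S) (g : Fin (m + 1) → S) :
    aeval (fun a => y * g a) f = y ^ n * aeval g f := by
  rw [aeval_def, aeval_def, eval₂_eq', eval₂_eq', Finset.mul_sum]
  refine Finset.sum_congr rfl fun e he => ?_
  have hn : n = ∑ a, e a := by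
    rw [hf.degree_eq_sum_deg_support he]
    exact Finset.sum_subset (Finset.subset_univ _) fun a _ ha => by simpa using ha
  simp_rw [mul_pow]
  rw [Finset.prod_mul_distrib, Finset.prod_pow_eq_pow_sum, ← hn]
  ring

theorem eval_smul_of_isHomogeneous {f : PR K m} {n : ℕ} (hf : f.IsHomogeneous n) (c : K)
    (v : Fin (m + 1) → K) : eval (c • v) f = c ^ n * eval v f :=
  aeval_mul_of_isHomogeneous hf c v

/-- The restriction of a polynomial to the affine line `t ↦ v + t u`. Its coefficients are the
Taylor coefficients at `v` in the direction `u`. -/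
def restrictLine (v u : Fin (m + 1) → K) : PR K m →ₐ[K] Polynomial K :=
  aeval fun a => Polynomial.C (v a) + Polynomial.C (u a) * Polynomial.X

section RestrictLine

variable (v u : Fin (m + 1) → K) (f : PR K m)

theorem eval_restrictLine (t : K) : (restrictLine v u f).eval t = eval (v + t • u) f := by
  rw [← Polynomial.coe_aeval_eq_eval, restrictLine, ← AlgHom.comp_apply, comp_aeval]
  exact congrArg (eval · f) (funext fun a => by simp [mul_comm (u a)])

theorem coeff_zero_restrictLine : (restrictLine v u f).coeff 0 = eval v f := by
  simp [Polynomial.coeff_zero_eq_eval_zero, eval_restrictLine]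

variable {f} {n : ℕ} (hf : f.IsHomogeneous n)
include hf

theorem homogenize_restrictLine :
    (restrictLine v u f).homogenize n = aeval (fun a => C (v a) * X 1 + C (u a) * X 0) f := by
  refine Polynomial.homogenize_eq_of_isHomogeneous ?_ ?_
  · rw [← one_mul n]
    exact hf.aeval _ fun a => ((isHomogeneous_X K 1).C_mul _).add ((isHomogeneous_X K 0).C_mul _)
  · rw [← AlgHom.comp_apply, comp_aeval]
    simp [restrictLine]

theorem aeval_smul_add_smul {S : Type*} [CommRing S] [Algebra K S] (y z : S) :
    aeval (fun a => v a • y + u a • z) f =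
      ∑ t ∈ Finset.range (n + 1), (restrictLine v u f).coeff t • (z ^ t * y ^ (n - t)) := by
  have h := congrArg (aeval ![z, y]) (homogenize_restrictLine v u hf)
  rw [← AlgHom.comp_apply, comp_aeval, Polynomial.homogenize] at h
  simpa [Finset.Nat.sum_antidiagonal_eq_sum_range_succ_mk, aeval_monomial,
    ← Algebra.smul_def] using h.symm

theorem natDegree_restrictLine_le : (restrictLine v u f).natDegree ≤ n := by
  rw [← mul_one n]
  refine aeval_natDegree_le f hf.totalDegree_le _ fun a => ?_
  compute_degree

theorem coeff_restrictLine_self : (restrictLine v u f).coeff n = eval u f := by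
  have h := aeval_smul_add_smul v u hf (0 : K) 1
  rw [Finset.sum_range_succ, Finset.sum_eq_zero fun t ht => ?_] at h
  · simpa using h.symm
  · simp [Nat.sub_ne_zero_of_lt (Finset.mem_range.1 ht)]

theorem eval_add_smul (t : K) :
    eval (v + t • u) f = ∑ i ∈ Finset.range (n + 1), t ^ i * (restrictLine v u f).coeff i := by
  rw [← eval_restrictLine, Polynomial.eval_eq_sum_range'
    (Nat.lt_succ_of_le (natDegree_restrictLine_le v u hf))]
  exact Finset.sum_congr rfl fun i _ => mul_comm _ _

end RestrictLine

section CoordForm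

/-- A linear functional on `K ^ (m + 1)` as a homogeneous polynomial of degree one. -/
def linearForm (φ : Module.Dual K (Fin (m + 1) → K)) : PR K m := ∑ a, C (φ (Pi.single a 1)) * X a

theorem isHomogeneous_linearForm (φ : Module.Dual K (Fin (m + 1) → K)) :
    (linearForm φ).IsHomogeneous 1 :=
  IsHomogeneous.sum _ _ _ fun a _ => (isHomogeneous_X K a).C_mul _

theorem eval_linearForm (φ : Module.Dual K (Fin (m + 1) → K)) (v : Fin (m + 1) → K) :
    eval v (linearForm φ) = φ v := by
  conv_rhs => rw [← (Pi.basisFun K (Fin (m + 1))).sum_repr v]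
  simp [linearForm, mul_comm]

variable (B : Module.Basis (Fin (m + 1)) K (Fin (m + 1) → K)) (i : Fin (m + 1))

/-- The linear form on `K ^ (m + 1)` computing the `i`-th coordinate with respect to the basis
`B`. -/
def coordForm : PR K m := linearForm (B.coord i)

theorem isHomogeneous_coordForm : (coordForm B i).IsHomogeneous 1 :=
  isHomogeneous_linearForm _

theorem isHomogeneous_coordForm_pow (t : ℕ) : (coordForm B i ^ t).IsHomogeneous t := by
  simpa using (isHomogeneous_coordForm B i).pow t

theorem isHomogeneous_coordForm_pow_mul_pow (j : Fin (m + 1)) {s t n : ℕ} (h : s + t = n) :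
    (coordForm B i ^ s * coordForm B j ^ t).IsHomogeneous n :=
  h ▸ (isHomogeneous_coordForm_pow B i s).mul (isHomogeneous_coordForm_pow B j t)

theorem eval_coordForm (v : Fin (m + 1) → K) : eval v (coordForm B i) = B.repr v i :=
  eval_linearForm _ v

theorem eval_basis_coordForm (j : Fin (m + 1)) :
    eval (B j) (coordForm B i) = if j = i then 1 else 0 := by
  rw [eval_coordForm, B.repr_self, Finsupp.single_apply]

theorem restrictLine_coordForm (v u : Fin (m + 1) → K) :
    restrictLine v u (coordForm B i) =
      Polynomial.C (B.repr v i) + Polynomial.C (B.repr u i) * Polynomial.X := by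
  rw [← eval_coordForm, ← eval_coordForm]
  simp only [restrictLine, coordForm, linearForm, map_sum, map_mul, aeval_X, aeval_C, eval_X,
    eval_C, Finset.sum_mul, ← Finset.sum_add_distrib, ← Polynomial.C_eq_algebraMap]
  exact Finset.sum_congr rfl fun a _ => by ring

theorem X_eq_sum_coordForm (a : Fin (m + 1)) : X a = ∑ k, C (B k a) * coordForm B k := by
  simp only [coordForm, linearForm, Module.Basis.coord_apply, Finset.mul_sum]
  rw [Finset.sum_comm]
  have h (b : Fin (m + 1)) : ∑ k, B.repr (Pi.single b 1) k * B k a = if b = a then 1 else 0 := by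
    have := congrFun (B.sum_repr (Pi.single b (1 : K))) a
    simpa [Pi.single_apply, eq_comm] using this
  have h' (b : Fin (m + 1)) : ∑ k, C (B k a) * (C (B.repr (Pi.single b 1) k) * X b) =
      C (if b = a then 1 else 0) * (X b : PR K m) := by
    rw [← h b, map_sum, Finset.sum_mul]
    exact Finset.sum_congr rfl fun k _ => by rw [C_mul]; ring
  rw [Finset.sum_congr rfl fun b _ => h' b]
  simp

variable {B i} {j : Fin (m + 1)}

theorem sub_sum_coordForm_mul_mem (hij : i ≠ j) {I : Ideal (PR K m)} {h f : PR K m} {n : ℕ}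
    (hI : ∀ l, l ≠ i → l ≠ j → coordForm B l * h ∈ I) (hf : f.IsHomogeneous n) :
    (f - ∑ t ∈ Finset.range (n + 1), C ((restrictLine (B i) (B j) f).coeff t) *
      (coordForm B j ^ t * coordForm B i ^ (n - t))) * h ∈ I := by
  rw [← smul_eq_mul, ← Submodule.mem_colon_singleton, ← Ideal.Quotient.eq_zero_iff_mem,
    map_sub, sub_eq_zero]
  set φ := Ideal.Quotient.mkₐ K (I.colon {h})
  have hφX : φ ∘ X = fun a => B i a • φ (coordForm B i) + B j a • φ (coordForm B j) := by
    funext a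
    rw [Function.comp_apply, X_eq_sum_coordForm B, map_sum,
      Finset.sum_eq_add i j hij (fun l _ hl => ?_) (by simp) (by simp)]
    · simp [← smul_eq_C_mul]
    · rw [map_mul, show φ (coordForm B l) = 0 from Ideal.Quotient.eq_zero_iff_mem.2
        (Submodule.mem_colon_singleton.2 (hI l hl.1 hl.2)), mul_zero]
  have hφ : φ f = aeval (φ ∘ X) f := by
    conv_lhs => rw [← aeval_X_left_apply f, ← AlgHom.comp_apply, comp_aeval]
    rfl
  change φ f = φ _
  rw [hφ, hφX, aeval_smul_add_smul _ _ hf, map_sum]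
  exact Finset.sum_congr rfl fun t _ => by simp [← smul_eq_C_mul]

end CoordForm

section HomogeneousIdeals

attribute [local instance] MvPolynomial.gradedAlgebra

theorem coe_decompose_homogeneousSubmodule (f : PR K m) (n : ℕ) :
    (DirectSum.decompose (homogeneousSubmodule (Fin (m + 1)) K) f n : PR K m) =
      homogeneousComponent n f :=
  decomposition.decompose'_apply f n

theorem isHomogI_iff_isHomogeneous {I : Ideal (PR K m)} :
    IsHomogI I ↔ I.IsHomogeneous (homogeneousSubmodule (Fin (m + 1)) K) := by
  refine ⟨fun h n f hf => ?_, fun h f hf n => homogeneousComponent_mem_of_mem h hf n⟩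
  rw [coe_decompose_homogeneousSubmodule]
  exact h f hf n

theorem homogeneousComponent_add_mul_of_isHomogeneous {f : PR K m} {i : ℕ}
    (hf : f.IsHomogeneous i) (g : PR K m) (n : ℕ) :
    homogeneousComponent (i + n) (f * g) = f * homogeneousComponent n g := by
  rw [← coe_decompose_homogeneousSubmodule, ← coe_decompose_homogeneousSubmodule]
  exact DirectSum.coe_decompose_mul_add_of_left_mem _ ((mem_homogeneousSubmodule i f).2 hf)

theorem mem_of_forall_homogeneousComponent_mem {I : Ideal (PR K m)} {f : PR K m}
    (h : ∀ n, homogeneousComponent n f ∈ I) : f ∈ I := by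
  rw [← sum_homogeneousComponent f]
  exact I.sum_mem fun n _ => h n

theorem IsHomogI.le_of_forall_isHomogeneous {I J : Ideal (PR K m)} (hI : IsHomogI I)
    (h : ∀ n, ∀ f ∈ I, f.IsHomogeneous n → f ∈ J) : I ≤ J := fun f hf =>
  mem_of_forall_homogeneousComponent_mem fun n =>
    h n _ (hI f hf n) (homogeneousComponent_isHomogeneous n f)

theorem IsHomogI.inf {I J : Ideal (PR K m)} (hI : IsHomogI I) (hJ : IsHomogI J) :
    IsHomogI (I ⊓ J) := fun f hf n => ⟨hI f hf.1 n, hJ f hf.2 n⟩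

theorem IsSatI.inf {I J : Ideal (PR K m)} (hI : IsSatI I) (hJ : IsSatI J) :
    IsSatI (I ⊓ J) := fun f hf => ⟨hI f fun a => (hf a).1, hJ f fun a => (hf a).2⟩

theorem IsSatI.mem_of_coordForm_pow_mul_mem {I : Ideal (PR K m)} (hI : IsSatI I)
    {B : Module.Basis (Fin (m + 1)) K (Fin (m + 1) → K)} {i : Fin (m + 1)} {g : PR K m}
    (hg : ∀ k, k ≠ i → coordForm B k * g ∈ I) {s : ℕ} (hs : coordForm B i ^ s * g ∈ I) :
    g ∈ I := by
  induction s with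
  | zero => simpa using hs
  | succ s ih =>
    refine ih (hI _ fun a => ?_)
    rw [X_eq_sum_coordForm B, Finset.sum_mul]
    refine I.sum_mem fun k _ => ?_
    rw [mul_assoc]
    refine I.mul_mem_left _ ?_
    rcases eq_or_ne k i with rfl | hk
    · rwa [← mul_assoc, ← pow_succ']
    · rw [mul_left_comm]
      exact I.mul_mem_left _ (hg k hk)

/-- The ideal of the degree-`N` divisor `N v` of the line through the points `v` and `u`,
generated by the forms vanishing to order `N` at `v` along this line. -/
def jetIdeal (v u : Fin (m + 1) → K) (N : ℕ) : Ideal (PR K m) :=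
  (((Ideal.span {Polynomial.X ^ N}).comap (restrictLine v u)).homogeneousCore
    (homogeneousSubmodule (Fin (m + 1)) K)).toIdeal

theorem isHomogI_jetIdeal (v u : Fin (m + 1) → K) (N : ℕ) : IsHomogI (jetIdeal v u N) :=
  isHomogI_iff_isHomogeneous.2 (HomogeneousIdeal.isHomogeneous _)

theorem mem_jetIdeal_iff {v u : Fin (m + 1) → K} {N n : ℕ} {f : PR K m}
    (hf : f.IsHomogeneous n) :
    f ∈ jetIdeal v u N ↔ Polynomial.X ^ N ∣ restrictLine v u f := by
  rw [← Ideal.mem_span_singleton, ← Ideal.mem_comap]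
  exact ⟨fun h => Ideal.toIdeal_homogeneousCore_le _ _ h,
    Ideal.mem_homogeneousCore_of_homogeneous_of_mem ⟨n, hf⟩⟩

theorem mem_jetIdeal_iff_coeff {v u : Fin (m + 1) → K} {N n : ℕ} {f : PR K m}
    (hf : f.IsHomogeneous n) :
    f ∈ jetIdeal v u N ↔ ∀ t < N, (restrictLine v u f).coeff t = 0 := by
  rw [mem_jetIdeal_iff hf, Polynomial.X_pow_dvd_iff]

end HomogeneousIdeals

section JetIdeal

variable {B : Module.Basis (Fin (m + 1)) K (Fin (m + 1) → K)} {i j : Fin (m + 1)}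

theorem isSatI_jetIdeal (hij : i ≠ j) (N : ℕ) : IsSatI (jetIdeal (B i) (B j) N) := by
  intro f hf
  refine mem_of_forall_homogeneousComponent_mem fun n => ?_
  have hmul : coordForm B i * f ∈ jetIdeal (B i) (B j) N := by
    simp only [coordForm, linearForm, Finset.sum_mul, mul_assoc]
    exact Ideal.sum_mem _ fun a _ => Ideal.mul_mem_left _ _ (hf a)
  have h := isHomogI_jetIdeal _ _ _ _ hmul (1 + n)
  have hn := homogeneousComponent_isHomogeneous n f
  rw [homogeneousComponent_add_mul_of_isHomogeneous (isHomogeneous_coordForm B i),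
    mem_jetIdeal_iff ((isHomogeneous_coordForm B i).mul hn), map_mul, restrictLine_coordForm] at h
  rw [mem_jetIdeal_iff hn]
  simpa [hij.symm] using h

theorem exists_order_of_notMem_jetIdeal {v u : Fin (m + 1) → K} {N n : ℕ} {f : PR K m}
    (hf : f.IsHomogeneous n) (hfN : f ∉ jetIdeal v u (N + 1)) :
    ∃ k ≤ N, k ≤ n ∧ (restrictLine v u f).coeff k ≠ 0 ∧
      ∀ t < k, (restrictLine v u f).coeff t = 0 := by
  rw [mem_jetIdeal_iff_coeff hf] at hfN
  push Not at hfN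
  obtain ⟨t, ht, hct⟩ := hfN
  refine ⟨(restrictLine v u f).natTrailingDegree, ?_, ?_, ?_, fun s =>
    Polynomial.coeff_eq_zero_of_lt_natTrailingDegree⟩
  · exact (Polynomial.natTrailingDegree_le_of_ne_zero hct).trans (Nat.le_of_lt_succ ht)
  · exact (Polynomial.natTrailingDegree_le_natDegree _).trans (natDegree_restrictLine_le v u hf)
  · exact Polynomial.trailingCoeff_nonzero_iff_nonzero.2 fun h0 => hct (by simp [h0])

/-- When a form of `I` vanishing to order exactly `k ≤ N` at `B i` is multiplied by
`coordForm B j ^ (N - k) * h`, only its monomial of order `k` survives modulo `I`. -/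
theorem IsSatI.coordForm_pow_mul_mem (hij : i ≠ j) {I : Ideal (PR K m)} (hI : IsSatI I)
    {N n : ℕ} {h f : PR K m} (hother : ∀ l, l ≠ i → l ≠ j → coordForm B l * h ∈ I)
    (hpow : coordForm B j ^ (N + 1) * h ∈ I) (hfI : f ∈ I) (hf : f.IsHomogeneous n)
    (hfN : f ∉ jetIdeal (B i) (B j) (N + 1)) : coordForm B j ^ N * h ∈ I := by
  obtain ⟨k, hkN, hkn, hck, hlt⟩ := exists_order_of_notMem_jetIdeal hf hfN
  set c := fun t => (restrictLine (B i) (B j) f).coeff t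
  set g := coordForm B j ^ (N - k) * h with hg
  have hsum : (∑ t ∈ Finset.range (n + 1), C (c t) *
      (coordForm B j ^ t * coordForm B i ^ (n - t))) * g ∈ I := by
    have := I.sub_mem (I.mul_mem_right g hfI) (sub_sum_coordForm_mul_mem hij (h := g)
      (fun l hli hlj => by rw [hg, mul_left_comm]; exact I.mul_mem_left _ (hother l hli hlj)) hf)
    rwa [← sub_mul, sub_sub_cancel] at this
  have hterm : C (c k) * (coordForm B j ^ k * coordForm B i ^ (n - k)) * g ∈ I := by
    rw [← Finset.add_sum_erase _ _ (Finset.mem_range.2 (Nat.lt_succ_of_le hkn)), add_mul] at hsum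
    refine (I.add_mem_iff_left ?_).1 hsum
    rw [Finset.sum_mul]
    refine I.sum_mem fun t ht => ?_
    rcases (Finset.ne_of_mem_erase ht).lt_or_gt with htk | htk
    · simp [c, hlt t htk]
    · have hexp : t + (N - k) = (t - k - 1) + (N + 1) := by omega
      convert I.mul_mem_left (C (c t) * coordForm B i ^ (n - t) * coordForm B j ^ (t - k - 1)) hpow
        using 1
      linear_combination C (c t) * coordForm B i ^ (n - t) * h *
        congrArg (coordForm B j ^ ·) hexp
  refine hI.mem_of_coordForm_pow_mul_mem (B := B) (i := i) (s := n - k) (fun l hl => ?_) ?_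
  · rcases eq_or_ne l j with rfl | hlj
    · rwa [← mul_assoc, ← pow_succ']
    · rw [mul_left_comm]
      exact I.mul_mem_left _ (hother l hl hlj)
  · convert I.mul_mem_left (C (c k)⁻¹) hterm using 1
    have hc : (C (c k)⁻¹ * C (c k) : PR K m) = 1 := by rw [← C_mul, inv_mul_cancel₀ hck, C_1]
    have hexp : k + (N - k) = N := by omega
    linear_combination (-(coordForm B j ^ k * coordForm B i ^ (n - k) * g)) * hc -
      coordForm B i ^ (n - k) * h * congrArg (coordForm B j ^ ·) hexp

end JetIdeal

section HilbertFunction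

theorem hilbQ_eq_finrank_range {V : Type*} [AddCommGroup V] [Module K V] {I : Ideal (PR K m)}
    {t : ℕ} (ψ : Hd K m t →ₗ[K] V) (hψ : ∀ f : Hd K m t, ψ f = 0 ↔ (f : PR K m) ∈ I) :
    hilbQ I t = Module.finrank K (LinearMap.range ψ) := by
  set q := (Ideal.Quotient.mkₐ K I).toLinearMap ∘ₗ (Hd K m t).subtype
  have hker : LinearMap.ker q = LinearMap.ker ψ := by
    ext f
    rw [LinearMap.mem_ker, LinearMap.mem_ker, hψ]
    exact Ideal.Quotient.eq_zero_iff_mem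
  have hrange : LinearMap.range q = (Hd K m t).map (Ideal.Quotient.mkₐ K I).toLinearMap := by
    rw [LinearMap.range_comp, Submodule.range_subtype]
  rw [hilbQ, ← hrange, ← q.quotKerEquivRange.finrank_eq, hker, ψ.quotKerEquivRange.finrank_eq]

variable {B : Module.Basis (Fin (m + 1)) K (Fin (m + 1) → K)} {i j : Fin (m + 1)}

theorem hilbQ_jetIdeal (hij : i ≠ j) {N t : ℕ} (hN : N ≤ t + 1) :
    hilbQ (jetIdeal (B i) (B j) N) t = N := by
  let ψ : Hd K m t →ₗ[K] (Fin N → K) :=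
    LinearMap.pi fun s => Polynomial.lcoeff K s ∘ₗ (restrictLine (B i) (B j)).toLinearMap ∘ₗ
      (Hd K m t).subtype
  have hψ (f : Hd K m t) (s : Fin N) : ψ f s = (restrictLine (B i) (B j) f).coeff s := rfl
  have hsurj : LinearMap.range ψ = ⊤ := by
    rw [eq_top_iff, ← (Pi.basisFun K (Fin N)).span_eq, Submodule.span_le]
    rintro _ ⟨s, rfl⟩
    have hs : (coordForm B j ^ (s : ℕ) * coordForm B i ^ (t - s)).IsHomogeneous t :=
      isHomogeneous_coordForm_pow_mul_pow B j i (by omega)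
    refine ⟨⟨_, hs⟩, funext fun s' => ?_⟩
    simp [hψ, restrictLine_coordForm, hij, hij.symm, Polynomial.coeff_X_pow, Pi.single_apply,
      Fin.ext_iff]
  rw [hilbQ_eq_finrank_range ψ fun f => ?_, hsurj, finrank_top, Module.finrank_fin_fun]
  rw [mem_jetIdeal_iff_coeff f.2, funext_iff, Fin.forall_iff]
  rfl

theorem idealDeg_jetIdeal (hij : i ≠ j) (N : ℕ) : idealDeg (jetIdeal (B i) (B j) N) = N := by
  have h : (fun t => hilbQ (jetIdeal (B i) (B j) N) t) =ᶠ[Filter.atTop] fun _ => N :=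
    Filter.eventually_atTop.2 ⟨N, fun t ht => hilbQ_jetIdeal hij (by omega)⟩
  rw [idealDeg, Filter.limsup_congr h, Filter.limsup_const]

end HilbertFunction

section Nullstellensatz

theorem eval_rep_mk_eq_zero_iff {f : PR K m} {n : ℕ} (hf : f.IsHomogeneous n)
    {v : Fin (m + 1) → K} (hv : v ≠ 0) :
    eval (Projectivization.mk K v hv).rep f = 0 ↔ eval v f = 0 := by
  obtain ⟨c, hc⟩ := Projectivization.exists_smul_eq_mk_rep K v hv
  rw [← hc, Units.smul_def, eval_smul_of_isHomogeneous hf]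
  simp

theorem IsHomogI.mem_radical_of_eval_eq_zero [IsAlgClosed K] {I : Ideal (PR K m)}
    (hI : IsHomogI I) {f : PR K m} {n : ℕ} (hf : f.IsHomogeneous n) (hn : n ≠ 0)
    (hvanish : ∀ a ∈ pzeroLocus I, eval a.rep f = 0) : f ∈ I.radical := by
  rw [← vanishingIdeal_zeroLocus_eq_radical (K := K), mem_vanishingIdeal_iff]
  intro v hv
  change eval v f = 0
  rcases eq_or_ne v 0 with rfl | hv0
  · simpa [hn] using eval_smul_of_isHomogeneous hf (0 : K) 0
  rw [← eval_rep_mk_eq_zero_iff hf hv0]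
  refine hvanish _ fun g hg k => ?_
  rw [eval_rep_mk_eq_zero_iff (homogeneousComponent_isHomogeneous k g) hv0]
  exact mem_zeroLocus_iff.1 hv _ (hI g hg k)

variable {B : Module.Basis (Fin (m + 1)) K (Fin (m + 1) → K)} {i j : Fin (m + 1)}

theorem jetIdeal_le (hij : i ≠ j) {I : Ideal (PR K m)} {N : ℕ}
    (hother : ∀ l, l ≠ i → l ≠ j → coordForm B l ∈ I) (hpow : coordForm B j ^ N ∈ I) :
    jetIdeal (B i) (B j) N ≤ I := by
  refine (isHomogI_jetIdeal _ _ _).le_of_forall_isHomogeneous fun n f hfN hf => ?_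
  have h := sub_sum_coordForm_mul_mem hij (h := 1) (by simpa using hother) hf
  rw [mul_one] at h
  refine (I.sub_mem_iff_left (I.sum_mem fun t _ => ?_)).1 h
  rcases lt_or_ge t N with ht | ht
  · simp [(mem_jetIdeal_iff_coeff hf).1 hfN t ht]
  · exact I.mul_mem_left _ (I.mul_mem_right _ (I.pow_mem_of_pow_mem hpow ht))

theorem PSub.eq_jetIdeal [IsAlgClosed K] (hij : i ≠ j) (A : PSub K m)
    (hother : ∀ l, l ≠ i → l ≠ j → coordForm B l ∈ A.I) {O : Pm K m} (hO : O.rep = B i)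
    (hsupp : pzeroLocus A.I = {O}) : A.I = jetIdeal (B i) (B j) (idealDeg A.I) := by
  classical
  have hex : ∃ N, coordForm B j ^ N ∈ A.I :=
    A.homog.mem_radical_of_eval_eq_zero (isHomogeneous_coordForm B j) one_ne_zero fun a ha => by
      obtain rfl : a = O := by simpa [hsupp] using ha
      simp [hO, eval_basis_coordForm, hij]
  obtain ⟨N, hN⟩ : ∃ N, Nat.find hex = N + 1 := by
    refine Nat.exists_eq_succ_of_ne_zero fun h0 => ?_
    have hone : (1 : PR K m) ∈ A.I := by simpa [h0] using Nat.find_spec hex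
    have hO' : O ∈ pzeroLocus A.I := by simp [hsupp]
    simpa [homogeneousComponent_zero] using hO' 1 hone 0
  have hpow : coordForm B j ^ (N + 1) ∈ A.I := hN ▸ Nat.find_spec hex
  have hI : A.I = jetIdeal (B i) (B j) (N + 1) := by
    refine le_antisymm (A.homog.le_of_forall_isHomogeneous fun n f hfI hf => ?_)
      (jetIdeal_le hij hother hpow)
    by_contra hfN
    have := A.sat.coordForm_pow_mul_mem hij (h := 1) (by simpa using hother) (by simpa using hpow)
      hfI hf hfN
    exact Nat.find_min hex (m := N) (by omega) (by simpa using this)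
  rw [hI, idealDeg_jetIdeal hij]

end Nullstellensatz

section Lines

theorem submodule_le_iff_rep_mem {V : Type*} [AddCommGroup V] [Module K V] (a : ℙ K V)
    (W : Submodule K V) : a.submodule ≤ W ↔ a.rep ∈ W := by
  rw [Projectivization.submodule_eq, Submodule.span_singleton_le_iff_mem]

theorem coordForm_mem_idealOfSet {B : Module.Basis (Fin (m + 1)) K (Fin (m + 1) → K)}
    {i j k : Fin (m + 1)} (hij : i ≠ j) (hki : k ≠ i) (hkj : k ≠ j)
    {W : Submodule K (Fin (m + 1) → K)} (hW : Module.finrank K W = 2) (hi : B i ∈ W)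
    (hj : B j ∈ W) : coordForm B k ∈ idealOfSet {a : Pm K m | a.submodule ≤ W} := by
  have hspan : Submodule.span K {B i, B j} = W := by
    have hli : LinearIndependent K ![B i, B j] := by
      convert B.linearIndependent.comp ![i, j] (by
        intro a b; fin_cases a <;> fin_cases b <;> simp [hij, hij.symm]) using 1
      ext a : 1
      fin_cases a <;> rfl
    refine Submodule.eq_of_le_of_finrank_eq
      (Submodule.span_le.2 (Set.insert_subset hi (Set.singleton_subset_iff.2 hj))) ?_
    rw [hW, ← Matrix.range_cons_cons_empty _ _ ![], finrank_span_eq_card hli, Fintype.card_fin]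
  refine Ideal.subset_span ⟨⟨1, isHomogeneous_coordForm B k⟩, fun a ha => ?_⟩
  rw [Set.mem_ofPred_eq, submodule_le_iff_rep_mem, ← hspan, Submodule.mem_span_pair] at ha
  obtain ⟨x, y, h⟩ := ha
  simp [eval_coordForm, ← h, hki.symm, hkj.symm]

theorem exists_basis_adapted_to_lines {L₁ L₂ : Set (Pm K 2)} (hL₁ : IsLine L₁) (hL₂ : IsLine L₂)
    {O O₂ : Pm K 2} (hO : L₁ ∩ L₂ = {O}) (hO₂ : O₂ ∈ L₂) (hne : O₂ ≠ O) :
    ∃ B : Module.Basis (Fin 3) K (Fin 3 → K), B 0 = O.rep ∧ B 2 = O₂.rep ∧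
      coordForm B 2 ∈ idealOfSet L₁ ∧ coordForm B 1 ∈ idealOfSet L₂ := by
  obtain ⟨W₁, hW₁, rfl⟩ := hL₁
  obtain ⟨W₂, hW₂, rfl⟩ := hL₂
  have hOmem : O ∈ {a : Pm K 2 | a.submodule ≤ W₁} ∩ {a | a.submodule ≤ W₂} := by simp [hO]
  have hO₁ : O.rep ∈ W₁ := (submodule_le_iff_rep_mem _ _).1 hOmem.1
  have hO₂₁ : O₂.rep ∉ W₁ := fun h =>
    hne (hO.subset ⟨(submodule_le_iff_rep_mem _ _).2 h, hO₂⟩)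
  obtain ⟨e, he⟩ := exists_linearIndependent_pair_of_one_lt_finrank (hW₁ ▸ one_lt_two)
    (x := (⟨O.rep, hO₁⟩ : W₁)) (by simpa [Subtype.ext_iff] using O.rep_nonzero)
  have hpair : LinearIndependent K ![O.rep, (e : Fin 3 → K)] :=
    LinearIndependent.pair_iff.2 fun s t h => LinearIndependent.pair_iff.1 he s t (Subtype.ext h)
  have htriple : LinearIndependent K ![O.rep, (e : Fin 3 → K), O₂.rep] := by
    rw [show ![O.rep, (e : Fin 3 → K), O₂.rep] = Fin.snoc ![O.rep, (e : Fin 3 → K)] O₂.rep by simp,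
      linearIndependent_finSnoc]
    refine ⟨hpair, fun h => hO₂₁ (Submodule.span_le.2 ?_ h)⟩
    rintro _ ⟨a, rfl⟩
    fin_cases a
    exacts [hO₁, e.2]
  let B := basisOfLinearIndependentOfCardEqFinrank htriple (by simp)
  have hB (i : Fin 3) : B i = ![O.rep, (e : Fin 3 → K), O₂.rep] i := by simp [B]
  refine ⟨B, hB 0, hB 2, ?_, ?_⟩
  · exact coordForm_mem_idealOfSet (i := 0) (j := 1) (by decide) (by decide) (by decide) hW₁
      (hB 0 ▸ hO₁) (hB 1 ▸ e.2)
  · exact coordForm_mem_idealOfSet (i := 0) (j := 2) (by decide) (by decide) (by decide) hW₂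
      (hB 0 ▸ (submodule_le_iff_rep_mem _ _).1 hOmem.2)
      (hB 2 ▸ (submodule_le_iff_rep_mem _ _).1 hO₂)

end Lines

section Jets

/-- The functional `f ↦ [t ^ k] f(v + t u)` on forms of degree `d`. -/
def jetCoeff (d : ℕ) (v u : Fin (m + 1) → K) (k : ℕ) : Module.Dual K (Hd K m d) :=
  Polynomial.lcoeff K k ∘ₗ (restrictLine v u).toLinearMap ∘ₗ (Hd K m d).subtype

/-- The functional `f ↦ ∑ k < N, α k [t ^ k] f(v + t u)` on forms of degree `d`: the general
element of the span of the Veronese image of the divisor `N v` of the line through `v` and `u`. -/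
def jetFunctional (d : ℕ) (v u : Fin (m + 1) → K) (N : ℕ) (α : ℕ → K) :
    Module.Dual K (Hd K m d) :=
  ∑ k ∈ Finset.range N, α k • jetCoeff d v u k

variable {d : ℕ} {v u v' u' : Fin (m + 1) → K}

theorem jetCoeff_apply (k : ℕ) (f : Hd K m d) :
    jetCoeff d v u k f = (restrictLine v u f).coeff k := rfl

theorem jetFunctional_apply (N : ℕ) (α : ℕ → K) (f : Hd K m d) :
    jetFunctional d v u N α f = ∑ k ∈ Finset.range N, α k * (restrictLine v u f).coeff k := by
  simp [jetFunctional, jetCoeff_apply]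

theorem mem_schemeSpanSub_jetIdeal_inf_iff {N N' : ℕ} {φ : Module.Dual K (Hd K m d)} :
    φ ∈ schemeSpanSub (jetIdeal v u N ⊓ jetIdeal v' u' N') d ↔
      ∃ α β, φ = jetFunctional d v u N α + jetFunctional d v' u' N' β := by
  constructor
  · intro hφ
    let L : Fin N ⊕ Fin N' → Module.Dual K (Hd K m d) :=
      Sum.elim (fun k => jetCoeff d v u k) fun k => jetCoeff d v' u' k
    have hker : ⨅ k, LinearMap.ker (L k) ≤ LinearMap.ker φ := by
      intro f hf
      rw [Submodule.mem_iInf] at hf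
      refine hφ f ⟨(mem_jetIdeal_iff_coeff f.2).2 fun t ht => ?_,
        (mem_jetIdeal_iff_coeff f.2).2 fun t ht => ?_⟩
      exacts [hf (.inl ⟨t, ht⟩), hf (.inr ⟨t, ht⟩)]
    obtain ⟨c, hc⟩ := (Submodule.mem_span_range_iff_exists_fun K).1
      (mem_span_of_iInf_ker_le_ker hker)
    refine ⟨fun k => if h : k < N then c (.inl ⟨k, h⟩) else 0,
      fun k => if h : k < N' then c (.inr ⟨k, h⟩) else 0, ?_⟩
    rw [← hc, jetFunctional, jetFunctional, Finset.sum_range, Finset.sum_range,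
      Fintype.sum_sum_type]
    simp [L]
  · rintro ⟨α, β, rfl⟩ f ⟨hf, hf'⟩
    rw [SetLike.mem_coe, mem_jetIdeal_iff_coeff f.2] at hf hf'
    rw [LinearMap.add_apply, jetFunctional_apply, jetFunctional_apply,
      Finset.sum_eq_zero fun k hk => ?_, Finset.sum_eq_zero fun k hk => ?_, add_zero]
    · rw [hf' k (Finset.mem_range.1 hk), mul_zero]
    · rw [hf k (Finset.mem_range.1 hk), mul_zero]

variable {B : Module.Basis (Fin (m + 1)) K (Fin (m + 1) → K)} {i j k : Fin (m + 1)}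

theorem jetFunctional_coordForm_mul (hki : k ≠ i) (hkj : k ≠ j) (N : ℕ) (α : ℕ → K)
    {f : Hd K m d} {h : PR K m} (hf : f = coordForm B k * h) :
    jetFunctional d (B i) (B j) N α f = 0 := by
  simp [jetFunctional_apply, hf, restrictLine_coordForm, hki.symm, hkj.symm]

theorem jetFunctional_coordForm_pow_mul (hij : i ≠ j) (p : ℕ) (α : ℕ → K) {f : Hd K m d}
    {h : PR K m} (hf : f = coordForm B j ^ p * h) :
    jetFunctional d (B i) (B j) (p + 1) α f = α p * eval (B i) h := by
  have hcoeff (k : ℕ) (hk : k < p + 1) : (restrictLine (B i) (B j) f).coeff k =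
      if k = p then eval (B i) h else 0 := by
    simp only [hf, map_mul, map_pow, restrictLine_coordForm, Module.Basis.repr_self,
      Finsupp.single_eq_of_ne' hij, Finsupp.single_eq_same, map_zero, map_one, zero_add, one_mul,
      Polynomial.coeff_X_pow_mul']
    rcases Nat.lt_succ_iff_lt_or_eq.1 hk with hlt | rfl
    · rw [if_neg hlt.not_ge, if_neg hlt.ne]
    · rw [if_pos le_rfl, if_pos rfl, Nat.sub_self, coeff_zero_restrictLine]
  rw [jetFunctional_apply, Finset.sum_congr rfl fun k hk => by
    rw [hcoeff k (Finset.mem_range.1 hk)]]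
  simp

end Jets

section TwoJets

theorem jetIdeal_anti {v u : Fin (m + 1) → K} {N N' : ℕ} (h : N ≤ N') :
    jetIdeal v u N' ≤ jetIdeal v u N :=
  (isHomogI_jetIdeal _ _ _).le_of_forall_isHomogeneous fun _ _ hf hfn =>
    (mem_jetIdeal_iff hfn).2 ((pow_dvd_pow _ h).trans ((mem_jetIdeal_iff hfn).1 hf))

theorem coordForm_mem_jetIdeal {B : Module.Basis (Fin (m + 1)) K (Fin (m + 1) → K)}
    {i j k : Fin (m + 1)} (hki : k ≠ i) (hkj : k ≠ j) (N : ℕ) :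
    coordForm B k ∈ jetIdeal (B i) (B j) N := by
  rw [mem_jetIdeal_iff (isHomogeneous_coordForm B k)]
  simp [restrictLine_coordForm, hki.symm, hkj.symm]

theorem coordForm_pow_mul_pow_mem_jetIdeal_iff
    {B : Module.Basis (Fin (m + 1)) K (Fin (m + 1) → K)} {i j : Fin (m + 1)} (hij : i ≠ j)
    {n s N : ℕ} : coordForm B j ^ n * coordForm B i ^ s ∈ jetIdeal (B i) (B j) N ↔ N ≤ n := by
  rw [mem_jetIdeal_iff (isHomogeneous_coordForm_pow_mul_pow B j i rfl)]
  simpa [restrictLine_coordForm, hij, hij.symm] using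
    pow_dvd_pow_iff Polynomial.X_ne_zero Polynomial.not_isUnit_X

theorem coordForm_pow_mem_jetIdeal {B : Module.Basis (Fin (m + 1)) K (Fin (m + 1) → K)}
    {i j : Fin (m + 1)} (hij : i ≠ j) (N : ℕ) : coordForm B j ^ N ∈ jetIdeal (B i) (B j) N := by
  simpa using (coordForm_pow_mul_pow_mem_jetIdeal_iff (s := 0) hij).2 (le_refl N)

variable (B : Module.Basis (Fin 3) K (Fin 3 → K)) (d p r : ℕ)

/-- The ideal of the union of the divisor `(p + 1) B₀` of the line `B₀B₁` and the divisor
`(r + 1) B₂` of the line `B₂B₀`. -/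
def twoJetIdeal : Ideal (PR K 2) :=
  jetIdeal (B 0) (B 1) (p + 1) ⊓ jetIdeal (B 2) (B 0) (r + 1)

/-- The general element of the span of the Veronese image of the scheme of `twoJetIdeal`. -/
def twoJet (α β : ℕ → K) : Module.Dual K (Hd K 2 d) :=
  jetFunctional d (B 0) (B 1) (p + 1) α + jetFunctional d (B 2) (B 0) (r + 1) β

variable {B d p r} {α β : ℕ → K}

theorem twoJet_coordForm_one_pow_mul (hp : p ≠ 0) {f : Hd K 2 d} {h : PR K 2}
    (hf : f = coordForm B 1 ^ p * h) : twoJet B d p r α β f = α p * eval (B 0) h := by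
  obtain ⟨q, rfl⟩ := Nat.exists_eq_succ_of_ne_zero hp
  rw [twoJet, LinearMap.add_apply, jetFunctional_coordForm_pow_mul (by decide) _ _ hf,
    jetFunctional_coordForm_mul (k := 1) (by decide) (by decide) _ _
      (hf.trans (by rw [pow_succ', mul_assoc])), add_zero]

theorem twoJet_coordForm_zero_pow_mul {f : Hd K 2 d} {h : PR K 2}
    (hf : f = coordForm B 0 ^ r * (coordForm B 2 * h)) :
    twoJet B d p r α β f = β r * eval (B 2) h := by
  rw [twoJet, LinearMap.add_apply, jetFunctional_coordForm_pow_mul (by decide) _ _ hf,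
    jetFunctional_coordForm_mul (k := 2) (by decide) (by decide) _ _
      (hf.trans (mul_left_comm _ _ _)), zero_add, map_mul, eval_basis_coordForm, if_pos rfl,
    one_mul]

theorem twoJet_coordForm_one_mul_coordForm_two_mul {f : Hd K 2 d} {h : PR K 2}
    (hf : f = coordForm B 1 * (coordForm B 2 * h)) : twoJet B d p r α β f = 0 := by
  rw [twoJet, LinearMap.add_apply,
    jetFunctional_coordForm_mul (k := 2) (by decide) (by decide) _ _
      (hf.trans (mul_left_comm _ _ _)),
    jetFunctional_coordForm_mul (k := 1) (by decide) (by decide) _ _ hf, add_zero]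

theorem twoJet_coordForm_one_pow_mul_coordForm_zero_pow (hp : p ≠ 0) {f : Hd K 2 d} {a b : ℕ}
    (ha : p ≤ a) (hf : f = coordForm B 1 ^ a * coordForm B 0 ^ b) :
    twoJet B d p r α β f = if a = p then α p else 0 := by
  obtain ⟨k, rfl⟩ := Nat.exists_eq_add_of_le ha
  rw [twoJet_coordForm_one_pow_mul hp (hf.trans (by rw [pow_add, mul_assoc]))]
  simp [eval_basis_coordForm, zero_pow_eq]

theorem twoJet_coordForm_zero_pow_mul_coordForm_two_pow {f : Hd K 2 d} {a b : ℕ}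
    (ha : r ≤ a) (hb : b ≠ 0) (hf : f = coordForm B 0 ^ a * coordForm B 2 ^ b) :
    twoJet B d p r α β f = if a = r then β r else 0 := by
  obtain ⟨k, rfl⟩ := Nat.exists_eq_add_of_le ha
  obtain ⟨b, rfl⟩ := Nat.exists_eq_add_one_of_ne_zero hb
  rw [twoJet_coordForm_zero_pow_mul (h := coordForm B 0 ^ k * coordForm B 2 ^ b)
    (hf.trans (by ring))]
  simp [eval_basis_coordForm, zero_pow_eq]

theorem twoJet_ne_zero (hp : p ≠ 0) (hpd : p ≤ d) (hα : α p ≠ 0) : twoJet B d p r α β ≠ 0 := by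
  intro h
  have hh := isHomogeneous_coordForm_pow_mul_pow B 1 0 (s := p) (t := d - p) (n := d) (by omega)
  have hval := twoJet_coordForm_one_pow_mul_coordForm_zero_pow (r := r) (α := α) (β := β) hp
    (f := ⟨_, hh⟩) le_rfl rfl
  rw [h, if_pos rfl] at hval
  exact hα hval.symm

theorem exists_isHomogeneous_notMem_of_lt {I J : Ideal (PR K m)} (hJ : IsHomogI J) (h : I < J) :
    ∃ n, ∃ f ∈ J, f.IsHomogeneous n ∧ f ∉ I := by
  by_contra! hle
  exact h.not_ge (hJ.le_of_forall_isHomogeneous hle)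

theorem coordForm_pow_mul_pow_mem_of_twoJetIdeal_lt {A : PSub K 2}
    (h : twoJetIdeal B p r < A.I) :
    coordForm B 1 ^ p * coordForm B 0 ^ (r + 1) ∈ A.I ∨
      coordForm B 0 ^ r * coordForm B 2 ∈ A.I := by
  have h0 : coordForm B 0 ^ (r + 1) ∈ jetIdeal (B 2) (B 0) (r + 1) :=
    coordForm_pow_mem_jetIdeal (by decide) _
  have h1 : coordForm B 1 ∈ jetIdeal (B 2) (B 0) (r + 1) :=
    coordForm_mem_jetIdeal (by decide) (by decide) _
  have h2 : coordForm B 2 ∈ jetIdeal (B 0) (B 1) (p + 1) :=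
    coordForm_mem_jetIdeal (by decide) (by decide) _
  obtain ⟨n, f, hfA, hf, hfI⟩ := exists_isHomogeneous_notMem_of_lt A.homog h
  rcases not_and_or.1 hfI with hf1 | hf2
  · refine .inl (A.sat.coordForm_pow_mul_mem (i := 0) (by decide) (fun l hl0 hl1 => h.le ?_)
      (h.le ⟨?_, Ideal.mul_mem_left _ _ h0⟩) hfA hf hf1)
    · obtain rfl : l = 2 := by revert l; decide
      exact ⟨Ideal.mul_mem_right _ _ h2, Ideal.mul_mem_left _ _ h0⟩
    · exact (coordForm_pow_mul_pow_mem_jetIdeal_iff (by decide)).2 le_rfl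
  · refine .inr (A.sat.coordForm_pow_mul_mem (i := 2) (by decide) (fun l hl2 hl0 => h.le ?_)
      (h.le ⟨Ideal.mul_mem_left _ _ h2, Ideal.mul_mem_right _ _ h0⟩) hfA hf hf2)
    obtain rfl : l = 1 := by revert l; decide
    exact ⟨Ideal.mul_mem_left _ _ h2, Ideal.mul_mem_right _ _ h1⟩

theorem ne_zero_of_twoJet_minimal
    (hmin : ∀ A : PSub K 2, twoJetIdeal B p r < A.I → twoJet B d p r α β ∉ schemeSpanSub A.I d) :
    α p ≠ 0 ∧ β r ≠ 0 := by
  let A (N N' : ℕ) : PSub K 2 := ⟨jetIdeal (B 0) (B 1) N ⊓ jetIdeal (B 2) (B 0) N',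
    (isHomogI_jetIdeal _ _ _).inf (isHomogI_jetIdeal _ _ _),
    (isSatI_jetIdeal (by decide) _).inf (isSatI_jetIdeal (by decide) _)⟩
  have hltp : twoJetIdeal B p r < (A p (r + 1)).I := by
    refine SetLike.lt_iff_le_and_exists.2 ⟨inf_le_inf_right _ (jetIdeal_anti p.le_succ),
      coordForm B 1 ^ p * coordForm B 0 ^ (r + 1), ⟨?_, Ideal.mul_mem_left _ _ ?_⟩, fun h => ?_⟩
    · exact (coordForm_pow_mul_pow_mem_jetIdeal_iff (by decide)).2 le_rfl
    · exact coordForm_pow_mem_jetIdeal (by decide) _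
    · exact p.not_succ_le_self ((coordForm_pow_mul_pow_mem_jetIdeal_iff (by decide)).1 h.1)
  have hltr : twoJetIdeal B p r < (A (p + 1) r).I := by
    refine SetLike.lt_iff_le_and_exists.2 ⟨inf_le_inf_left _ (jetIdeal_anti r.le_succ),
      coordForm B 0 ^ r * coordForm B 2 ^ 1, ⟨Ideal.mul_mem_left _ _ ?_, ?_⟩, fun h => ?_⟩
    · simpa using coordForm_mem_jetIdeal (B := B) (k := 2) (by decide) (by decide) (p + 1)
    · exact (coordForm_pow_mul_pow_mem_jetIdeal_iff (by decide)).2 le_rfl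
    · exact r.not_succ_le_self ((coordForm_pow_mul_pow_mem_jetIdeal_iff (by decide)).1 h.2)
  constructor
  · refine fun hα => hmin _ hltp (mem_schemeSpanSub_jetIdeal_inf_iff.2 ⟨α, β, ?_⟩)
    simp [twoJet, jetFunctional, Finset.sum_range_succ _ p, hα]
  · refine fun hβ => hmin _ hltr (mem_schemeSpanSub_jetIdeal_inf_iff.2 ⟨α, β, ?_⟩)
    simp [twoJet, jetFunctional, Finset.sum_range_succ _ r, hβ]

theorem twoJet_minimal_iff (hp : p ≠ 0) (hd : p + r + 1 ≤ d) :
    (∀ A : PSub K 2, twoJetIdeal B p r < A.I → twoJet B d p r α β ∉ schemeSpanSub A.I d) ↔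
      α p ≠ 0 ∧ β r ≠ 0 := by
  refine ⟨ne_zero_of_twoJet_minimal, fun ⟨hα, hβ⟩ A hlt hA => ?_⟩
  rcases coordForm_pow_mul_pow_mem_of_twoJetIdeal_lt hlt with h | h
  · have hh := isHomogeneous_coordForm_pow_mul_pow B 1 0 (s := p) (t := d - p) (n := d) (by omega)
    have hmem : coordForm B 1 ^ p * coordForm B 0 ^ (d - p) ∈ A.I := by
      rw [← Nat.add_sub_cancel' (show r + 1 ≤ d - p by omega), pow_add, ← mul_assoc]
      exact A.I.mul_mem_right _ h
    have hval := twoJet_coordForm_one_pow_mul_coordForm_zero_pow (r := r) (α := α) (β := β) hp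
      (f := ⟨_, hh⟩) le_rfl rfl
    exact hα (by rw [← hA ⟨_, hh⟩ hmem, hval, if_pos rfl])
  · have hh := isHomogeneous_coordForm_pow_mul_pow B 0 2 (s := r) (t := d - r) (n := d) (by omega)
    have hmem : coordForm B 0 ^ r * coordForm B 2 ^ (d - r) ∈ A.I := by
      rw [← Nat.sub_add_cancel (show 1 ≤ d - r by omega), pow_succ', ← mul_assoc]
      exact A.I.mul_mem_right _ h
    have hval := twoJet_coordForm_zero_pow_mul_coordForm_two_pow (p := p) (α := α) (β := β)
      (f := ⟨_, hh⟩) le_rfl (by omega) rfl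
    exact hβ (by rw [← hA ⟨_, hh⟩ hmem, hval, if_pos rfl])

end TwoJets

section Veronese

variable {d : ℕ}

theorem nu_apply (v : Fin (m + 1) → K) (f : Hd K m d) : nu d v f = eval v (f : PR K m) := rfl

theorem nu_smul (c : K) (v : Fin (m + 1) → K) : nu d (c • v) = c ^ d • nu d v :=
  LinearMap.ext fun f => eval_smul_of_isHomogeneous f.2 c v

theorem nu_ne_zero {v : Fin (m + 1) → K} (hv : v ≠ 0) : nu d v ≠ 0 := by
  obtain ⟨j, hj⟩ := Function.ne_iff.1 hv
  intro h
  have := DFunLike.congr_fun h ⟨X j ^ d, by simpa using (isHomogeneous_X K j).pow d⟩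
  simp only [nu_apply, map_pow, eval_X, LinearMap.zero_apply] at this
  exact pow_ne_zero d hj this

/-- The point `ν_d(a)` of the Veronese variety. -/
def veronese (d : ℕ) (a : Pm K m) : PN K m d :=
  Projectivization.mk K (nu d a.rep) (nu_ne_zero a.rep_nonzero)

theorem submodule_veronese (a : Pm K m) :
    (veronese d a).submodule = Submodule.span K {nu d a.rep} :=
  Projectivization.submodule_mk _ _

theorem range_veronese : Set.range (veronese d) = XSet K m d := by
  ext Q
  refine exists_congr fun a => ?_
  rw [← submodule_veronese, eq_comm, Projectivization.submodule_injective.eq_iff]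

theorem image_veronese_subset_XSet (T : Set (Pm K m)) : veronese d '' T ⊆ XSet K m d :=
  (Set.image_subset_range _ _).trans range_veronese.subset

theorem span_rep_image_veronese (T : Set (Pm K m)) :
    Submodule.span K (Projectivization.rep '' (veronese d '' T)) = dualSpan d T := by
  rw [dualSpan, Submodule.span_eq_iSup_of_singleton_spans,
    Submodule.span_eq_iSup_of_singleton_spans]
  simp only [iSup_image, ← Projectivization.submodule_eq, submodule_veronese]

theorem nu_mem_dualSpan {v : Fin (m + 1) → K} (hv : v ≠ 0) {T : Set (Pm K m)}
    (hT : Projectivization.mk K v hv ∈ T) : nu d v ∈ dualSpan d T := by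
  obtain ⟨c, hc⟩ := Projectivization.exists_smul_eq_mk_rep K v hv
  have hmem : nu d (Projectivization.mk K v hv).rep ∈ dualSpan d T :=
    Submodule.subset_span ⟨_, hT, rfl⟩
  rw [← hc, Units.smul_def, nu_smul] at hmem
  exact (Submodule.smul_mem_iff _ (pow_ne_zero d c.ne_zero)).1 hmem

theorem dualSpan_mono {S T : Set (Pm K m)} (h : S ⊆ T) : dualSpan d S ≤ dualSpan d T :=
  Submodule.span_mono (Set.image_mono h)

theorem dualSpan_univ [Infinite K] : dualSpan d (Set.univ : Set (Pm K m)) = ⊤ := by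
  have : FiniteDimensional K (Hd K m d) :=
    Module.Finite.iff_fg.2 (homogeneousSubmodule_fg _ _ d)
  have hco : (dualSpan d (Set.univ : Set (Pm K m))).dualCoannihilator = ⊥ := by
    refine (Submodule.eq_bot_iff _).2 fun f hf => Subtype.ext ?_
    rw [Submodule.mem_dualCoannihilator] at hf
    have hXf : X 0 * (f : PR K m) = 0 := by
      refine MvPolynomial.funext fun v => ?_
      rcases eq_or_ne v 0 with rfl | hv
      · simp
      · rw [map_mul, ← nu_apply, hf _ (nu_mem_dualSpan hv (Set.mem_univ _)), mul_zero, map_zero]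
    exact (mul_eq_zero.1 hXf).resolve_left (X_ne_zero 0)
  rw [← Subspace.dualCoannihilator_dualAnnihilator_eq (W := dualSpan d Set.univ), hco,
    Submodule.dualAnnihilator_bot]

theorem exists_finset_mem_dualSpan [Infinite K] (φ : Module.Dual K (Hd K m d)) :
    ∃ T : Finset (Pm K m), φ ∈ dualSpan d T := by
  classical
  have hφ : φ ∈ dualSpan d Set.univ := dualSpan_univ (K := K) (m := m) ▸ Submodule.mem_top
  obtain ⟨U, hU, hφU⟩ := Submodule.mem_span_finite_of_mem_span hφ
  obtain ⟨T, -, rfl⟩ := Finset.subset_set_image_iff.1 hU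
  exact ⟨T, by simpa [dualSpan] using hφU⟩

theorem srank_le_card {P : PN K m d} {T : Finset (Pm K m)} (h : P.rep ∈ dualSpan d T) :
    srank d P ≤ T.card := by
  classical
  have hle : srank d P ≤ (T.image (veronese d)).card := by
    refine Nat.sInf_le ⟨T.image (veronese d), ?_, rfl, ?_⟩ <;> rw [Finset.coe_image]
    exacts [image_veronese_subset_XSet _, by rwa [span_rep_image_veronese]]
  exact hle.trans Finset.card_image_le

theorem exists_finset_card_le_of_subset_XSet {S : Finset (PN K m d)} (hS : ↑S ⊆ XSet K m d) :
    ∃ T : Finset (Pm K m), T.card ≤ S.card ∧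
      dualSpan d T = Submodule.span K (Projectivization.rep '' (S : Set (PN K m d))) := by
  classical
  have hlift (Q : S) : ∃ a, veronese d a = (Q : PN K m d) := by
    rw [← Set.mem_range, range_veronese]
    exact hS Q.2
  choose a ha using hlift
  refine ⟨Finset.univ.image a, Finset.card_image_le.trans (by simp), ?_⟩
  have himage : veronese d '' Set.range a = S := by
    rw [← Set.range_comp, show veronese d ∘ a = Subtype.val from funext ha, Subtype.range_coe]
  rw [Finset.coe_image, Finset.coe_univ, Set.image_univ, ← himage, span_rep_image_veronese]

theorem exists_srank_decomposition [Infinite K] (P : PN K m d) :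
    ∃ (T : Finset (Pm K m)) (l : Pm K m → K), T.card ≤ srank d P ∧ (∀ t ∈ T, l t ≠ 0) ∧
      P.rep = ∑ t ∈ T, l t • nu d t.rep := by
  classical
  have hne : {r | ∃ S : Finset (PN K m d), ↑S ⊆ XSet K m d ∧ S.card = r ∧
      P.rep ∈ Submodule.span K (Projectivization.rep '' (S : Set (PN K m d)))}.Nonempty := by
    obtain ⟨T, hT⟩ := exists_finset_mem_dualSpan P.rep
    refine ⟨_, T.image (veronese d), ?_, rfl, ?_⟩ <;> rw [Finset.coe_image]
    exacts [image_veronese_subset_XSet _, by rwa [span_rep_image_veronese]]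
  obtain ⟨S, hSX, hScard, hSP⟩ := Nat.sInf_mem hne
  obtain ⟨T, hTS, hT⟩ := exists_finset_card_le_of_subset_XSet hSX
  rw [← hT, dualSpan, Submodule.mem_span_image_finset_iff_exists_fun'] at hSP
  obtain ⟨l, hl⟩ := hSP
  refine ⟨T.filter (l · ≠ 0), l, ?_, fun t ht => (Finset.mem_filter.1 ht).2, ?_⟩
  · exact (Finset.card_filter_le _ _).trans (hTS.trans hScard.le)
  · rw [← hl, Finset.sum_filter_of_ne]
    intro t _ ht h0
    simp [h0] at ht

theorem mem_secantWrt_XSet_iff {s : ℕ} (hs : s ≠ 0) {P : PN K m d} :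
    P ∈ secantWrt (XSet K m d) s ↔ ∀ F ∈ polyFunctions K (Module.Dual K (Hd K m d)),
      (∀ T : Finset (Pm K m), T.card ≤ s → ∀ φ ∈ dualSpan d T, F φ = 0) →
        ∀ c : K, F (c • P.rep) = 0 := by
  classical
  refine ⟨fun h F hF hvan => h F hF ?_, fun h F hF hvan => h F hF fun T hT φ hφ => ?_⟩
  · rintro Q ⟨S, hSX, hScard, hSQ⟩ c
    obtain ⟨T, hTS, hT⟩ := exists_finset_card_le_of_subset_XSet hSX
    exact hvan T (hTS.trans hScard) _ (Submodule.smul_mem _ c (hT ▸ hSQ))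
  · have hvan' (T : Finset (Pm K m)) (hT : T.card ≤ s) (φ) (hφ : φ ∈ dualSpan d T) (h0 : φ ≠ 0)
        (c : K) : F (c • φ) = 0 := by
      obtain ⟨z, hz⟩ := Projectivization.exists_smul_eq_mk_rep K φ h0
      have := hvan (Projectivization.mk K φ h0) ⟨T.image (veronese d), ?_, ?_, ?_⟩ (c * (z⁻¹ : Kˣ))
      · rwa [← hz, Units.smul_def, smul_smul, mul_assoc, Units.inv_mul, mul_one] at this
      · rw [Finset.coe_image]
        exact image_veronese_subset_XSet _
      · exact Finset.card_image_le.trans hT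
      · rw [← hz, Finset.coe_image, span_rep_image_veronese]
        exact Submodule.smul_mem _ _ hφ
    rcases eq_or_ne φ 0 with rfl | h0
    · have hv : (1 : Fin (m + 1) → K) ≠ 0 := one_ne_zero
      have := hvan' {Projectivization.mk K 1 hv} (by simpa [Nat.one_le_iff_ne_zero])
        (nu d 1) (nu_mem_dualSpan hv (by simp)) (nu_ne_zero hv) 0
      rwa [zero_smul] at this
    · simpa using hvan' T hT φ hφ h0 1

end Veronese

section Catalecticant

theorem det_eq_pow_mul_pow_of_triangular_blocks {p r : ℕ} {a b : K}
    {M : Matrix (Fin p ⊕ Fin r) (Fin p ⊕ Fin r) K}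
    (h₁₁ : ∀ i i', i' ≤ i → M (.inl i) (.inl i') = if i = i' then a else 0)
    (h₂₂ : ∀ j j', j' ≤ j → M (.inr j) (.inr j') = if j = j' then b else 0)
    (h₂₁ : ∀ j i, M (.inr j) (.inl i) = 0) : M.det = a ^ p * b ^ r := by
  rw [← Matrix.fromBlocks_toBlocks M, show M.toBlocks₂₁ = 0 from Matrix.ext h₂₁,
    Matrix.det_fromBlocks_zero₂₁,
    Matrix.det_of_isUpperTriangular (M := M.toBlocks₁₁) fun i i' (h : i' < i) =>
      (h₁₁ i i' h.le).trans (if_neg h.ne'),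
    Matrix.det_of_isUpperTriangular (M := M.toBlocks₂₂) fun j j' (h : j' < j) =>
      (h₂₂ j j' h.le).trans (if_neg h.ne')]
  simp [Matrix.toBlocks₁₁, Matrix.toBlocks₂₂, h₁₁, h₂₂]

variable {e e' : ℕ} {ι : Type} {f : ι → Hd K m e} {g : ι → Hd K m e'}

/-- The minor with rows `f` and columns `g` of the catalecticant matrix of `φ`, the matrix of the
bilinear form `(a, b) ↦ φ (a * b)`. -/
def catalecticant (f : ι → Hd K m e) (g : ι → Hd K m e')
    (φ : Module.Dual K (Hd K m (e + e'))) : Matrix ι ι K :=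
  Matrix.of fun i j => φ ⟨f i * g j, (f i).2.mul (g j).2⟩

variable [Fintype ι] [DecidableEq ι]

theorem det_catalecticant_mem_polyFunctions (f : ι → Hd K m e) (g : ι → Hd K m e') :
    (fun φ => (catalecticant f g φ).det) ∈ polyFunctions K (Module.Dual K (Hd K m (e + e'))) := by
  have hdet : (fun φ => (catalecticant f g φ).det) = ∑ σ : Equiv.Perm ι,
      (Equiv.Perm.sign σ : ℤ) • ∏ i, fun φ => catalecticant f g φ (σ i) i := by
    funext φ
    simp [Matrix.det_apply', zsmul_eq_mul]
  rw [hdet]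
  refine Subalgebra.sum_mem _ fun σ _ =>
    Subalgebra.zsmul_mem _ (Subalgebra.prod_mem _ fun i _ => Algebra.subset_adjoin ?_) _
  exact ⟨Module.Dual.eval K _ ⟨f (σ i) * g i, (f (σ i)).2.mul (g i).2⟩, rfl⟩

theorem det_catalecticant_eq_zero {T : Finset (Pm K m)} (hT : T.card < Fintype.card ι)
    {φ : Module.Dual K (Hd K m (e + e'))} (hφ : φ ∈ dualSpan (e + e') T) :
    (catalecticant f g φ).det = 0 := by
  classical
  rw [dualSpan, Submodule.mem_span_image_finset_iff_exists_fun'] at hφ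
  obtain ⟨l, rfl⟩ := hφ
  have hfactor : catalecticant f g (∑ t ∈ T, l t • nu (e + e') t.rep) =
      (Matrix.of fun i (t : T) => eval t.1.rep (f i : PR K m)) *
        Matrix.of fun (t : T) j => l t * eval t.1.rep (g j : PR K m) := by
    ext i j
    simp only [catalecticant, Matrix.of_apply, Matrix.mul_apply, LinearMap.sum_apply,
      LinearMap.smul_apply, nu_apply, map_mul, smul_eq_mul, Finset.univ_eq_attach]
    rw [← Finset.sum_attach]
    exact Finset.sum_congr rfl fun t _ => by ring
  by_contra hne
  have hrank := Matrix.rank_of_det_ne_zero hne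
  rw [hfactor] at hrank
  have hle := (Matrix.rank_mul_le_left
    (Matrix.of fun i (t : T) => eval t.1.rep (f i : PR K m))
    (Matrix.of fun (t : T) j => l t * eval t.1.rep (g j : PR K m))).trans
      (Matrix.rank_le_card_width _)
  exact hT.not_ge (by simpa using hrank.ge.trans hle)

theorem card_le_of_mem_secantWrt {P : PN K m (e + e')}
    (hdet : (catalecticant f g P.rep).det ≠ 0) {s : ℕ} (hs : s ≠ 0)
    (hP : P ∈ secantWrt (XSet K m (e + e')) s) : Fintype.card ι ≤ s := by
  by_contra! hlt
  have h := (mem_secantWrt_XSet_iff hs).1 hP _ (det_catalecticant_mem_polyFunctions f g)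
    (fun T hT φ hφ => det_catalecticant_eq_zero (hT.trans_lt hlt) hφ) 1
  exact hdet (by rwa [one_smul] at h)

variable {B : Module.Basis (Fin 3) K (Fin 3 → K)} {p r : ℕ} {α β : ℕ → K}

theorem exists_det_catalecticant_twoJet (hp : p ≠ 0) (hpe : p ≤ e) (hre : r < e) (hpe' : p ≤ e')
    (hre' : r < e') : ∃ (f : Fin (p + 1) ⊕ Fin (r + 1) → Hd K 2 e)
      (g : Fin (p + 1) ⊕ Fin (r + 1) → Hd K 2 e'),
      (catalecticant f g (twoJet B (e + e') p r α β)).det = α p ^ (p + 1) * β r ^ (r + 1) := by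
  have hf₁ (i : Fin (p + 1)) := isHomogeneous_coordForm_pow_mul_pow B 1 0 (n := e)
    (s := i) (t := e - i) (by omega)
  have hf₂ (j : Fin (r + 1)) := isHomogeneous_coordForm_pow_mul_pow B 0 2 (n := e)
    (s := j) (t := e - j) (by omega)
  have hg₁ (i : Fin (p + 1)) := isHomogeneous_coordForm_pow_mul_pow B 1 0 (n := e')
    (s := p - i) (t := e' - (p - i)) (by omega)
  have hg₂ (j : Fin (r + 1)) := isHomogeneous_coordForm_pow_mul_pow B 0 2 (n := e')
    (s := r - j) (t := e' - (r - j)) (by omega)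
  let f : Fin (p + 1) ⊕ Fin (r + 1) → Hd K 2 e := Sum.elim (⟨_, hf₁ ·⟩) (⟨_, hf₂ ·⟩)
  let g : Fin (p + 1) ⊕ Fin (r + 1) → Hd K 2 e' := Sum.elim (⟨_, hg₁ ·⟩) (⟨_, hg₂ ·⟩)
  refine ⟨f, g, ?_⟩
  refine det_eq_pow_mul_pow_of_triangular_blocks (fun i i' h => ?_) (fun j j' h => ?_)
    fun j i => ?_
  · refine (twoJet_coordForm_one_pow_mul_coordForm_zero_pow (a := i + (p - i'))
      (b := (e - i) + (e' - (p - i'))) hp (by omega) ?_).trans (if_congr (by omega) rfl rfl)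
    simp only [f, g, Sum.elim_inl]
    ring
  · refine (twoJet_coordForm_zero_pow_mul_coordForm_two_pow (a := j + (r - j'))
      (b := (e - j) + (e' - (r - j'))) (by omega) (by omega) ?_).trans
        (if_congr (by omega) rfl rfl)
    simp only [f, g, Sum.elim_inr]
    ring
  · rcases Nat.lt_succ_iff_lt_or_eq.1 i.2 with hi | hi
    · obtain ⟨k, hk⟩ := Nat.exists_eq_add_one_of_ne_zero (show e - j ≠ 0 by omega)
      obtain ⟨l, hl⟩ := Nat.exists_eq_add_one_of_ne_zero (show p - i ≠ 0 by omega)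
      refine twoJet_coordForm_one_mul_coordForm_two_mul (h := coordForm B 0 ^ (j : ℕ) *
        coordForm B 2 ^ k * coordForm B 1 ^ l * coordForm B 0 ^ (e' - (p - i))) ?_
      simp only [f, g, Sum.elim_inr, Sum.elim_inl, hk, hl]
      ring
    · refine (twoJet_coordForm_zero_pow_mul_coordForm_two_pow (a := j + e') (b := e - j)
        (by omega) (by omega) ?_).trans (if_neg (by omega))
      simp only [f, g, Sum.elim_inr, Sum.elim_inl, hi, Nat.sub_self, Nat.sub_zero]
      ring

theorem le_of_twoJet_mem_secantWrt {d : ℕ} (hp : p ≠ 0) (hpd : 2 * p ≤ d) (hrd : 2 * r + 2 ≤ d)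
    (hα : α p ≠ 0) (hβ : β r ≠ 0) {P : PN K 2 d} (hP : P.rep = twoJet B d p r α β) {s : ℕ}
    (hs : s ≠ 0) (hPs : P ∈ secantWrt (XSet K 2 d) s) : p + r + 2 ≤ s := by
  obtain ⟨e', rfl⟩ : ∃ e', d = max p (r + 1) + e' := Nat.exists_eq_add_of_le (by omega)
  obtain ⟨f, g, hfg⟩ := exists_det_catalecticant_twoJet (e := max p (r + 1)) (e' := e') (B := B)
    (p := p) (r := r) (α := α) (β := β) hp (by omega) (by omega) (by omega) (by omega)
  have h := card_le_of_mem_secantWrt (f := f) (g := g)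
    (by rw [hP, hfg]; exact mul_ne_zero (pow_ne_zero _ hα) (pow_ne_zero _ hβ)) hs hPs
  simp only [Fintype.card_sum, Fintype.card_fin] at h
  omega

end Catalecticant

section PolyCurves

variable {V : Type} [AddCommGroup V] [Module K V]

/-- The polynomial curves in a vector space, parametrized by the affine line. -/
def polyCurves (K V : Type) [Field K] [AddCommGroup V] [Module K V] : Submodule K (K → V) where
  carrier := {γ | ∀ φ : V →ₗ[K] K, ∃ q : Polynomial K, ∀ t, φ (γ t) = q.eval t}
  add_mem' hγ hδ φ := by
    obtain ⟨q, hq⟩ := hγ φ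
    obtain ⟨q', hq'⟩ := hδ φ
    exact ⟨q + q', fun t => by simp [hq, hq']⟩
  zero_mem' φ := ⟨0, fun t => by simp⟩
  smul_mem' c γ hγ φ := by
    obtain ⟨q, hq⟩ := hγ φ
    exact ⟨Polynomial.C c * q, fun t => by simp [hq]⟩

theorem pow_smul_mem_polyCurves (i : ℕ) (v : V) : (fun t => t ^ i • v) ∈ polyCurves K V :=
  fun φ => ⟨Polynomial.C (φ v) * Polynomial.X ^ i, fun t => by
    rw [map_smul, smul_eq_mul, mul_comm, Polynomial.eval_C_mul, Polynomial.eval_pow,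
      Polynomial.eval_X]⟩

theorem exists_eq_eval_of_mem_polyFunctions {F : V → K} (hF : F ∈ polyFunctions K V)
    {γ : K → V} (hγ : γ ∈ polyCurves K V) : ∃ q : Polynomial K, ∀ t, F (γ t) = q.eval t := by
  induction hF using Algebra.adjoin_induction with
  | mem F hF =>
    obtain ⟨φ, rfl⟩ := hF
    exact hγ φ
  | algebraMap c => exact ⟨Polynomial.C c, fun t => by simp⟩
  | add F G _ _ hF hG =>
    obtain ⟨q, hq⟩ := hF
    obtain ⟨q', hq'⟩ := hG
    exact ⟨q + q', fun t => by simp [hq, hq']⟩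
  | mul F G _ _ hF hG =>
    obtain ⟨q, hq⟩ := hF
    obtain ⟨q', hq'⟩ := hG
    exact ⟨q * q', fun t => by simp [hq, hq']⟩

theorem eq_zero_of_mem_polyFunctions_of_mem_polyCurves [Infinite K] {F : V → K}
    (hF : F ∈ polyFunctions K V) {γ : K → V} (hγ : γ ∈ polyCurves K V)
    (h : ∀ t ≠ 0, F (γ t) = 0) : F (γ 0) = 0 := by
  obtain ⟨q, hq⟩ := exists_eq_eval_of_mem_polyFunctions hF hγ
  have hq0 : q = 0 := q.eq_zero_of_infinite_isRoot
    ((Set.finite_singleton 0).infinite_compl.mono fun t ht => (hq t).symm.trans (h t ht))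
  simp [hq, hq0]

theorem mem_secantWrt_of_mem_polyCurves [Infinite K] {d s : ℕ} (hs : s ≠ 0) {P : PN K m d}
    {γ : K → Module.Dual K (Hd K m d)} (hγ : γ ∈ polyCurves K (Module.Dual K (Hd K m d)))
    (hγ0 : γ 0 = P.rep)
    (h : ∀ t ≠ 0, ∃ T : Finset (Pm K m), T.card ≤ s ∧ γ t ∈ dualSpan d T) :
    P ∈ secantWrt (XSet K m d) s := by
  refine (mem_secantWrt_XSet_iff hs).2 fun F hF hvan c => hγ0 ▸ ?_
  refine eq_zero_of_mem_polyFunctions_of_mem_polyCurves hF (Submodule.smul_mem _ c hγ)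
    fun t ht => ?_
  obtain ⟨T, hT, hγT⟩ := h t ht
  exact hvan T hT _ (Submodule.smul_mem _ c hγT)

end PolyCurves

section Moments

theorem exists_sum_mul_pow_eq {N : ℕ} {s : Fin N → K} (hs : Function.Injective s)
    (b : Fin N → K) : ∃ l : Fin N → K, ∀ i : Fin N, ∑ j, l j * s j ^ (i : ℕ) = b i := by
  have hunit : IsUnit (Matrix.vandermonde s) :=
    (Matrix.isUnit_iff_isUnit_det _).2 (Matrix.det_vandermonde_ne_zero_iff.2 hs).isUnit
  obtain ⟨l, hl⟩ := Matrix.vecMul_surjective_iff_isUnit.2 hunit b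
  exact ⟨l, fun i => congrFun hl i⟩

variable {d : ℕ} {v u : Fin (m + 1) → K}

theorem nu_add_smul (t : K) :
    nu d (v + t • u) = ∑ i ∈ Finset.range (d + 1), t ^ i • jetCoeff d v u i := by
  ext f
  simp [nu_apply, eval_add_smul v u f.2, jetCoeff_apply]

theorem exists_finset_sum_jetCoeff_mem_dualSpan (hvu : ∀ t : K, v + t • u ≠ 0) {N : ℕ}
    (l s : Fin N → K) : ∃ T : Finset (Pm K m), T.card ≤ N ∧
      ∑ i ∈ Finset.range (d + 1), (∑ j, l j * s j ^ i) • jetCoeff d v u i ∈ dualSpan d T := by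
  classical
  refine ⟨Finset.univ.image fun j => Projectivization.mk K _ (hvu (s j)),
    Finset.card_image_le.trans (by simp), ?_⟩
  have hsum : ∑ i ∈ Finset.range (d + 1), (∑ j, l j * s j ^ i) • jetCoeff d v u i =
      ∑ j, l j • nu d (v + s j • u) := by
    simp_rw [nu_add_smul, Finset.smul_sum, Finset.sum_smul, mul_smul]
    exact Finset.sum_comm
  rw [hsum]
  exact Submodule.sum_mem _ fun j _ => Submodule.smul_mem _ _
    (nu_mem_dualSpan (hvu _) (by simp))

theorem exists_dual_moments [Infinite K] (n : ℕ) :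
    ∃ (s : Fin n → K) (l : Fin n → Fin n → K), ∀ (k : Fin n), ∀ i < n,
      ∑ j, l k j * s j ^ i = if i = k then 1 else 0 := by
  let s : Fin n ↪ K := Fin.valEmbedding.trans (Infinite.natEmbedding K)
  choose l hl using fun k : Fin n => exists_sum_mul_pow_eq s.injective (Pi.single k 1)
  refine ⟨s, l, fun k i hi => ?_⟩
  rw [hl k ⟨i, hi⟩, Pi.single_apply]
  exact if_congr Fin.ext_iff rfl rfl

-- For `t ≠ 0` the curve is `∑ₖ ∑ⱼ α k * t⁻ᵏ * l k j • ν_d(v + t * s j • u)`, which lies in the span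
-- of `n` points and has no poles because the low moments of `l k` vanish.
theorem exists_polyCurve_jetFunctional [Infinite K] (hvu : ∀ t : K, v + t • u ≠ 0) {n : ℕ}
    (hn : n ≤ d + 1) (α : ℕ → K) :
    ∃ γ ∈ polyCurves K (Module.Dual K (Hd K m d)), γ 0 = jetFunctional d v u n α ∧
      ∀ t ≠ 0, ∃ T : Finset (Pm K m), T.card ≤ n ∧ γ t ∈ dualSpan d T := by
  obtain ⟨s, l, hl⟩ := exists_dual_moments (K := K) n
  let c (k : Fin n) (i : ℕ) : K := ∑ j, l k j * s j ^ i
  let γ : K → Module.Dual K (Hd K m d) := ∑ i ∈ Finset.range (d + 1), ∑ k : Fin n,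
    fun t => t ^ (i - k) • ((α k * c k i) • jetCoeff d v u i)
  have hγ (t : K) : γ t = ∑ i ∈ Finset.range (d + 1),
      (∑ k : Fin n, t ^ (i - k) * (α k * c k i)) • jetCoeff d v u i := by
    simp_rw [γ, Finset.sum_apply, Finset.sum_smul, mul_smul]
  refine ⟨γ, Submodule.sum_mem _ fun i _ => Submodule.sum_mem _ fun k _ =>
    pow_smul_mem_polyCurves _ _, ?_, fun t ht => ?_⟩
  · rw [hγ, jetFunctional, ← Finset.sum_subset (Finset.range_subset_range.2 hn) fun i _ hi => ?_]
    · refine Finset.sum_congr rfl fun i hi => congrArg (· • _) ?_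
      rw [Finset.mem_range] at hi
      rw [Fintype.sum_eq_single ⟨i, hi⟩ fun k hk => ?_]
      · simp [c, hl _ i hi]
      · rw [show c k i = _ from hl k i hi, if_neg fun h => hk (Fin.ext h.symm), mul_zero, mul_zero]
    · rw [Finset.mem_range, not_lt] at hi
      rw [Finset.sum_eq_zero fun k _ => ?_, zero_smul]
      rw [zero_pow (by omega), zero_mul]
  · obtain ⟨T, hT, hmem⟩ := exists_finset_sum_jetCoeff_mem_dualSpan (d := d) hvu
      (fun j => ∑ k : Fin n, α k * (t⁻¹ ^ (k : ℕ) * l k j)) fun j => t * s j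
    refine ⟨T, hT, ?_⟩
    have hpow (k : Fin n) (i : ℕ) : t ^ (i - k) * c k i = t⁻¹ ^ (k : ℕ) * t ^ i * c k i := by
      rcases le_or_gt (k : ℕ) i with hki | hik
      · rw [pow_sub₀ t ht hki, inv_pow, mul_comm (t ^ i)]
      · rw [show c k i = _ from hl k i (hik.trans k.2), if_neg hik.ne, mul_zero, mul_zero]
    simp_rw [hγ, mul_left_comm _ (α _), hpow, c]
    simp_rw [Finset.sum_mul, Finset.mul_sum] at hmem ⊢
    convert hmem using 3 with i
    rw [Finset.sum_comm]
    exact Finset.sum_congr rfl fun j _ => Finset.sum_congr rfl fun k _ => by ring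

theorem add_smul_basis_ne_zero {i j : Fin (m + 1)} (hij : i ≠ j)
    (B : Module.Basis (Fin (m + 1)) K (Fin (m + 1) → K)) (t : K) : B i + t • B j ≠ 0 := by
  intro h
  simpa [hij.symm] using DFunLike.congr_fun (congrArg B.repr h) i

theorem twoJet_mem_secantWrt [Infinite K] {B : Module.Basis (Fin 3) K (Fin 3 → K)} {p r : ℕ}
    (hp : p ≤ d) (hr : r ≤ d) {α β : ℕ → K} {P : PN K 2 d} (hP : P.rep = twoJet B d p r α β) :
    P ∈ secantWrt (XSet K 2 d) (p + r + 2) := by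
  classical
  obtain ⟨γ, hγ, hγ0, hγT⟩ := exists_polyCurve_jetFunctional
    (add_smul_basis_ne_zero (i := 0) (j := 1) (by decide) B) (Nat.succ_le_succ hp) α
  obtain ⟨δ, hδ, hδ0, hδT⟩ := exists_polyCurve_jetFunctional
    (add_smul_basis_ne_zero (i := 2) (j := 0) (by decide) B) (Nat.succ_le_succ hr) β
  refine mem_secantWrt_of_mem_polyCurves (by omega) (Submodule.add_mem _ hγ hδ)
    (by rw [Pi.add_apply, hγ0, hδ0, hP, twoJet]) fun t ht => ?_
  obtain ⟨S, hS, hγS⟩ := hγT t ht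
  obtain ⟨T, hT, hδT⟩ := hδT t ht
  refine ⟨S ∪ T, (Finset.card_union_le _ _).trans (by omega), Submodule.add_mem _ ?_ ?_⟩
  · exact dualSpan_mono (by simp) hγS
  · exact dualSpan_mono (by simp) hδT

theorem brank_eq_of_twoJet [Infinite K] {B : Module.Basis (Fin 3) K (Fin 3 → K)} {p r : ℕ}
    (hp : p ≠ 0) (hpd : 2 * p ≤ d) (hrd : 2 * r + 2 ≤ d) {α β : ℕ → K} (hα : α p ≠ 0)
    (hβ : β r ≠ 0) {P : PN K 2 d} (hP : P.rep = twoJet B d p r α β) :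
    brank d P = p + r + 2 := by
  have hmem := twoJet_mem_secantWrt (by omega) (by omega) hP
  refine le_antisymm (Nat.sInf_le ⟨by omega, hmem⟩) (le_csInf ⟨_, by omega, hmem⟩ ?_)
  rintro s ⟨hs, hPs⟩
  exact le_of_twoJet_mem_secantWrt hp hpd hrd hα hβ hP hs.ne' hPs

end Moments

section Relations

theorem exists_linear_separating {s q : Pm K m} (h : s ≠ q) :
    ∃ φ : Module.Dual K (Fin (m + 1) → K), φ s.rep = 0 ∧ φ q.rep ≠ 0 := by
  have hq : q.rep ∉ Submodule.span K {s.rep} := by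
    rw [Submodule.mem_span_singleton, ← Projectivization.mk_eq_mk_iff' K _ _ q.rep_nonzero
      s.rep_nonzero, q.mk_rep, s.mk_rep]
    exact h.symm
  obtain ⟨φ, hφq, hφs⟩ := Submodule.exists_le_ker_of_notMem hq
  exact ⟨φ, hφs (Submodule.mem_span_singleton_self _), hφq⟩

theorem exists_isHomogeneous_separating {T : Finset (Pm K m)} {q : Pm K m} (hq : q ∉ T) {n : ℕ}
    (hn : T.card ≤ n) :
    ∃ h : PR K m, h.IsHomogeneous n ∧ (∀ s ∈ T, eval s.rep h = 0) ∧ eval q.rep h ≠ 0 := by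
  choose! φ hφ hφq using fun s (hs : s ∈ T) =>
    exists_linear_separating (ne_of_mem_of_not_mem hs hq)
  obtain ⟨i, hi⟩ := Function.ne_iff.1 q.rep_nonzero
  refine ⟨(∏ s ∈ T, linearForm (φ s)) * X i ^ (n - T.card), ?_, fun s hs => ?_, ?_⟩
  · have hprod := (IsHomogeneous.prod T (fun s => linearForm (φ s)) _ fun s _ =>
      isHomogeneous_linearForm (φ s)).mul (isHomogeneous_X_pow i (n - T.card))
    rwa [Finset.sum_const, smul_eq_mul, mul_one, Nat.add_sub_cancel' hn] at hprod
  · rw [map_mul, map_prod, Finset.prod_eq_zero hs, zero_mul]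
    rw [eval_linearForm, hφ s hs]
  · rw [map_mul, map_prod, map_pow, eval_X]
    refine mul_ne_zero (Finset.prod_ne_zero_iff.2 fun s hs => ?_) (pow_ne_zero _ hi)
    rw [eval_linearForm]
    exact hφq s hs

theorem exists_ne_zero_linear_eq_zero (hm : 2 ≤ m) (v u : Fin (m + 1) → K) :
    ∃ φ : Module.Dual K (Fin (m + 1) → K), φ ≠ 0 ∧ φ v = 0 ∧ φ u = 0 := by
  let L := (Module.Dual.eval K (Fin (m + 1) → K) v).prod (Module.Dual.eval K _ u)
  have hker : LinearMap.ker L ≠ ⊥ := LinearMap.ker_ne_bot_of_finrank_lt (by simp; omega)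
  obtain ⟨φ, hφ, hφ0⟩ := Submodule.exists_mem_ne_zero_of_ne_bot hker
  exact ⟨φ, hφ0, congrArg Prod.fst hφ, congrArg Prod.snd hφ⟩

variable {d e : ℕ} {T : Finset (Pm K m)} {μ : Pm K m → K}

theorem sum_smul_nu_apply (f : Hd K m d) :
    (∑ s ∈ T, μ s • nu d s.rep) f = ∑ s ∈ T, μ s * eval s.rep (f : PR K m) := by
  simp [nu_apply]

open Classical in
theorem sum_filter_smul_nu_apply {l : PR K m} {f : Hd K m d} {g : Hd K m e}
    (hf : (f : PR K m) = l * g) :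
    (∑ s ∈ T with eval s.rep l ≠ 0, (μ s * eval s.rep l) • nu e s.rep) g =
      (∑ s ∈ T, μ s • nu d s.rep) f := by
  rw [sum_smul_nu_apply, sum_smul_nu_apply, hf, Finset.sum_filter]
  refine Finset.sum_congr rfl fun s _ => ?_
  split_ifs with hs
  · rw [map_mul, mul_assoc]
  · rw [map_mul, not_not.1 hs, zero_mul, mul_zero]

open Classical in
theorem sum_filter_smul_nu_eq_zero {k : ℕ} {l : PR K m} (hl : l.IsHomogeneous k)
    (hd : k + e = d) (h : ∑ s ∈ T, μ s • nu d s.rep = 0) :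
    ∑ s ∈ T with eval s.rep l ≠ 0, (μ s * eval s.rep l) • nu e s.rep = 0 := by
  ext g
  rw [sum_filter_smul_nu_apply (f := ⟨l * (g : PR K m), hd ▸ hl.mul g.2⟩) rfl, h,
    LinearMap.zero_apply, LinearMap.zero_apply]

open Classical in
theorem lt_card_filter_eval_ne_zero {n : ℕ} {f : PR K m} (hf : f.IsHomogeneous e) (hd : e + n = d)
    {v : Fin (m + 1) → K} (hv : v ≠ 0) (hfv : eval v f = 0) {c : K} (hc : c ≠ 0)
    (h : ∀ (F : Hd K m d) (g : PR K m), F = f * g →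
      (∑ s ∈ T, μ s • nu d s.rep) F = c * eval v g) :
    n < (T.filter fun s => eval s.rep f ≠ 0).card := by
  by_contra! hcard
  obtain ⟨g, hg, hgT, hgv⟩ := exists_isHomogeneous_separating
    (q := Projectivization.mk K v hv) (by simp [eval_rep_mk_eq_zero_iff hf, hfv]) hcard
  rw [Ne, eval_rep_mk_eq_zero_iff hg] at hgv
  refine mul_ne_zero hc hgv ?_
  rw [← h ⟨f * g, hd ▸ hf.mul hg⟩ g rfl, sum_smul_nu_apply]
  refine Finset.sum_eq_zero fun s hs => ?_
  by_cases hfs : eval s.rep f = 0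
  · simp [hfs]
  · simp [hgT s (Finset.mem_filter.2 ⟨hs, hfs⟩)]

theorem add_two_le_card_of_sum_smul_nu_eq_zero (hT : T.Nonempty) (hμ : ∀ s ∈ T, μ s ≠ 0)
    (h : ∑ s ∈ T, μ s • nu e s.rep = 0) : e + 2 ≤ T.card := by
  classical
  by_contra! hlt
  obtain ⟨q, hq⟩ := hT
  obtain ⟨g, hg, hgT, hgq⟩ := exists_isHomogeneous_separating (Finset.notMem_erase q T) (n := e)
    (by rw [Finset.card_erase_of_mem hq]; omega)
  have hsum := sum_smul_nu_apply (T := T) (μ := μ) ⟨g, hg⟩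
  rw [h, LinearMap.zero_apply, ← Finset.add_sum_erase T _ hq,
    Finset.sum_eq_zero fun s hs => by rw [hgT s hs, mul_zero], add_zero] at hsum
  exact mul_ne_zero (hμ q hq) hgq hsum.symm

open Classical in
theorem two_mul_add_two_le_card_or_exists_linear (hm : 2 ≤ m) (hT : T.Nonempty)
    (hμ : ∀ s ∈ T, μ s ≠ 0) (h : ∑ s ∈ T, μ s • nu e s.rep = 0) :
    2 * e + 2 ≤ T.card ∨ ∃ φ : Module.Dual K (Fin (m + 1) → K), φ ≠ 0 ∧
      e + 2 ≤ (T.filter fun s => φ s.rep = 0).card := by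
  induction e generalizing T μ with
  | zero =>
    left
    simpa using add_two_le_card_of_sum_smul_nu_eq_zero hT hμ h
  | succ e ih =>
    have hcard := add_two_le_card_of_sum_smul_nu_eq_zero hT hμ h
    have hsplit (φ : Module.Dual K (Fin (m + 1) → K)) :
        (T.filter fun s => φ s.rep = 0).card + (T.filter fun s => φ s.rep ≠ 0).card = T.card :=
      Finset.card_filter_add_card_filter_not _
    have hμφ (φ : Module.Dual K (Fin (m + 1) → K)) :
        ∀ s ∈ T.filter fun s => φ s.rep ≠ 0, μ s * φ s.rep ≠ 0 := fun s hs =>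
      mul_ne_zero (hμ s (Finset.mem_filter.1 hs).1) (Finset.mem_filter.1 hs).2
    have hres (φ : Module.Dual K (Fin (m + 1) → K)) :
        ∑ s ∈ T with φ s.rep ≠ 0, (μ s * φ s.rep) • nu e s.rep = 0 := by
      simpa only [eval_linearForm] using
        sum_filter_smul_nu_eq_zero (isHomogeneous_linearForm φ) (Nat.add_comm 1 e) h
    obtain ⟨a, ha, b, hb, hab⟩ := Finset.one_lt_card.1 (show 1 < T.card by omega)
    obtain ⟨φ, hφ, hφa, hφb⟩ := exists_ne_zero_linear_eq_zero hm a.rep b.rep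
    have htwo : 1 < (T.filter fun s => φ s.rep = 0).card := Finset.one_lt_card.2
      ⟨a, Finset.mem_filter.2 ⟨ha, hφa⟩, b, Finset.mem_filter.2 ⟨hb, hφb⟩, hab⟩
    have hφT := hsplit φ
    rcases (T.filter fun s => φ s.rep ≠ 0).eq_empty_or_nonempty with hempty | hne
    · exact .inr ⟨φ, hφ, by rw [hempty, Finset.card_empty] at hφT; omega⟩
    rcases ih hne (hμφ φ) (hres φ) with hmany | ⟨ψ, hψ, hψT⟩
    · left
      omega
    have hψle := hψT.trans (Finset.card_le_card
      (Finset.filter_subset_filter (fun s => ψ s.rep = 0) (Finset.filter_subset _ T)))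
    have hψsplit := hsplit ψ
    rcases (T.filter fun s => ψ s.rep ≠ 0).eq_empty_or_nonempty with hempty | hne
    · exact .inr ⟨ψ, hψ, by rw [hempty, Finset.card_empty] at hψsplit; omega⟩
    · left
      have := add_two_le_card_of_sum_smul_nu_eq_zero hne (hμφ ψ) (hres ψ)
      omega

end Relations

section RankLowerBound

variable {d p r : ℕ} {B : Module.Basis (Fin 3) K (Fin 3 → K)} {α β : ℕ → K}
  {S : Finset (Pm K 2)} {l : Pm K 2 → K}

open Classical in
theorem lt_card_filter_of_twoJet_zero (hp : p ≠ 0) (hα : α p ≠ 0)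
    (hS : twoJet B d p r α β = ∑ s ∈ S, l s • nu d s.rep) {g : PR K 2} {k n : ℕ}
    (hg : g.IsHomogeneous k) (hgB : eval (B 0) g ≠ 0) (hd : p + k + n = d) :
    n < (S.filter fun s => eval s.rep (coordForm B 1 * g) ≠ 0).card := by
  have h := lt_card_filter_eval_ne_zero (T := S) (μ := l)
    ((isHomogeneous_coordForm_pow B 1 p).mul hg) hd (B.ne_zero 0)
      (by simp [eval_basis_coordForm, hp]) (mul_ne_zero hα hgB) fun F f hF => by
      rw [← hS, twoJet_coordForm_one_pow_mul hp (hF.trans (mul_assoc _ _ _)), map_mul, mul_assoc]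
  refine h.trans_le (Finset.card_le_card (Finset.monotone_filter_right S fun s _ hs => ?_))
  rw [map_mul, map_pow] at hs
  rw [map_mul]
  exact mul_ne_zero (ne_zero_pow hp (left_ne_zero_of_mul hs)) (right_ne_zero_of_mul hs)

open Classical in
theorem lt_card_filter_of_twoJet_two (hr : r ≠ 0) (hβ : β r ≠ 0)
    (hS : twoJet B d p r α β = ∑ s ∈ S, l s • nu d s.rep) {g : PR K 2} {k n : ℕ}
    (hg : g.IsHomogeneous k) (hgB : eval (B 2) g ≠ 0) (hd : r + (1 + k) + n = d) :
    n < (S.filter fun s => eval s.rep (coordForm B 2 * g) ≠ 0).card := by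
  have h := lt_card_filter_eval_ne_zero (T := S) (μ := l) ((isHomogeneous_coordForm_pow B 0 r).mul
    ((isHomogeneous_coordForm B 2).mul hg)) hd
    (B.ne_zero 2) (by simp [eval_basis_coordForm, hr]) (mul_ne_zero hβ hgB) fun F f hF => by
      rw [← hS, twoJet_coordForm_zero_pow_mul (h := g * f) (hF.trans (by ring)), map_mul,
        mul_assoc]
  refine h.trans_le (Finset.card_le_card (Finset.monotone_filter_right S fun s _ hs => ?_))
  rw [map_mul] at hs
  exact right_ne_zero_of_mul hs

open Classical in
theorem sum_filter_smul_nu_eq_zero_of_twoJet (hd : 2 ≤ d)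
    (hS : twoJet B d p r α β = ∑ s ∈ S, l s • nu d s.rep) :
    ∑ s ∈ S with eval s.rep (coordForm B 1 * coordForm B 2) ≠ 0,
      (l s * eval s.rep (coordForm B 1 * coordForm B 2)) • nu (d - 2) s.rep = 0 := by
  ext g
  have hhom : (coordForm B 1 * coordForm B 2 * (g : PR K 2)).IsHomogeneous d := by
    have := ((isHomogeneous_coordForm B 1).mul (isHomogeneous_coordForm B 2)).mul g.2
    rwa [show 1 + 1 + (d - 2) = d by omega] at this
  rw [sum_filter_smul_nu_apply (f := ⟨_, hhom⟩) rfl, ← hS,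
    twoJet_coordForm_one_mul_coordForm_two_mul (mul_assoc _ _ _), LinearMap.zero_apply]

theorem apply_basis_zero_or_two_ne_zero {φ : Module.Dual K (Fin 3 → K)} (hφ : φ ≠ 0)
    {v : Fin 3 → K} (hv : φ v = 0) (hv1 : B.repr v 1 ≠ 0) : φ (B 0) ≠ 0 ∨ φ (B 2) ≠ 0 := by
  by_contra! h
  refine hφ (B.ext fun i => ?_)
  have hsum : φ v = B.repr v 1 * φ (B 1) := by
    conv_lhs => rw [← B.sum_repr v]
    simp [-Module.Basis.sum_repr, Fin.sum_univ_three, h.1, h.2]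
  fin_cases i
  exacts [h.1, (mul_eq_zero.1 (hsum.symm.trans hv)).resolve_left hv1, h.2]

open Classical in
theorem le_card_of_le_card_filter_linear (hp : 2 ≤ p) (hr : r ≠ 0) (hpd : p + 1 ≤ d)
    (hrd : r + 2 ≤ d) (hα : α p ≠ 0) (hβ : β r ≠ 0)
    (hS : twoJet B d p r α β = ∑ s ∈ S, l s • nu d s.rep) {φ : Module.Dual K (Fin 3 → K)}
    (hφ : φ (B 0) ≠ 0 ∨ φ (B 2) ≠ 0) (hφS : d ≤ (S.filter fun s => φ s.rep = 0).card) :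
    2 * d + 1 ≤ S.card + p + r := by
  have hsplit := Finset.card_filter_add_card_filter_not (s := S) (fun s => φ s.rep = 0)
  have hle (f : PR K 2) : (S.filter fun s => eval s.rep (f * linearForm φ) ≠ 0).card ≤
      (S.filter fun s => ¬φ s.rep = 0).card :=
    Finset.card_le_card (Finset.monotone_filter_right S fun s _ hs => by
      rw [map_mul, eval_linearForm] at hs
      exact right_ne_zero_of_mul hs)
  simp only [← eval_linearForm φ (B _)] at hφ
  rcases hφ with h0 | h2
  · have := (lt_card_filter_of_twoJet_zero (by omega) hα hS (isHomogeneous_linearForm φ) h0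
      (show p + 1 + (d - p - 1) = d by omega)).trans_le (hle _)
    omega
  · have := (lt_card_filter_of_twoJet_two hr hβ hS (isHomogeneous_linearForm φ) h2
      (show r + (1 + 1) + (d - r - 2) = d by omega)).trans_le (hle _)
    omega

theorem le_card_of_forall_coordForm_mul_eq_zero (hp : p ≠ 0) (hr : r ≠ 0) (hpd : p ≤ d)
    (hrd : r + 1 ≤ d) (hα : α p ≠ 0) (hβ : β r ≠ 0)
    (hS : twoJet B d p r α β = ∑ s ∈ S, l s • nu d s.rep)
    (h : ∀ s ∈ S, eval s.rep (coordForm B 1 * coordForm B 2) = 0) :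
    2 * d + 1 ≤ S.card + p + r := by
  classical
  have h0 := lt_card_filter_of_twoJet_zero hp hα hS (isHomogeneous_one _ K) (by simp)
    (show p + 0 + (d - p) = d by omega)
  have h2 := lt_card_filter_of_twoJet_two hr hβ hS (isHomogeneous_one _ K) (by simp)
    (show r + (1 + 0) + (d - r - 1) = d by omega)
  simp only [mul_one] at h0 h2
  have hdisj : Disjoint (S.filter fun s => eval s.rep (coordForm B 1) ≠ 0)
      (S.filter fun s => eval s.rep (coordForm B 2) ≠ 0) :=
    Finset.disjoint_filter.2 fun s hs h1 h2 => mul_ne_zero h1 h2 (by rw [← map_mul, h s hs])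
  have hunion := Finset.card_le_card (Finset.union_subset
    (Finset.filter_subset (fun s => eval s.rep (coordForm B 1) ≠ 0) S)
    (Finset.filter_subset (fun s => eval s.rep (coordForm B 2) ≠ 0) S))
  rw [Finset.card_union_of_disjoint hdisj] at hunion
  omega

theorem two_mul_add_one_le_card_of_twoJet (hp : 2 ≤ p) (hr : r ≠ 0) (hpd : p + 1 ≤ d)
    (hrd : r + 2 ≤ d) (hα : α p ≠ 0) (hβ : β r ≠ 0) (hl : ∀ s ∈ S, l s ≠ 0)
    (hS : twoJet B d p r α β = ∑ s ∈ S, l s • nu d s.rep) :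
    2 * d + 1 ≤ S.card + p + r := by
  classical
  set T := S.filter fun s => eval s.rep (coordForm B 1 * coordForm B 2) ≠ 0 with hT
  have hTS : T ⊆ S := Finset.filter_subset _ _
  rcases T.eq_empty_or_nonempty with hempty | hne
  · refine le_card_of_forall_coordForm_mul_eq_zero (by omega) hr (by omega) (by omega) hα hβ hS
      fun s hs => not_not.1 (Finset.filter_eq_empty_iff.1 hempty hs)
  rcases two_mul_add_two_le_card_or_exists_linear le_rfl hne
    (fun s hs => mul_ne_zero (hl s (hTS hs)) (Finset.mem_filter.1 hs).2)
    (sum_filter_smul_nu_eq_zero_of_twoJet (by omega) hS) with hcard | ⟨φ, hφ, hφT⟩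
  · have := Finset.card_le_card hTS
    omega
  · obtain ⟨s, hs⟩ := Finset.card_pos.1 ((Nat.succ_pos _).trans_le hφT)
    rw [Finset.mem_filter, hT, Finset.mem_filter, map_mul, eval_coordForm] at hs
    refine le_card_of_le_card_filter_linear hp hr hpd hrd hα hβ hS
      (apply_basis_zero_or_two_ne_zero hφ hs.2 (left_ne_zero_of_mul hs.1.2)) ?_
    have := Finset.card_le_card (Finset.filter_subset_filter (fun s => φ s.rep = 0) hTS)
    omega

theorem two_mul_add_one_le_srank_of_twoJet [Infinite K] (hp : 2 ≤ p) (hr : r ≠ 0)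
    (hpd : p + 1 ≤ d) (hrd : r + 2 ≤ d) (hα : α p ≠ 0) (hβ : β r ≠ 0) {P : PN K 2 d}
    (hP : P.rep = twoJet B d p r α β) : 2 * d + 1 ≤ srank d P + p + r := by
  obtain ⟨T, l, hT, hl, hPT⟩ := exists_srank_decomposition P
  have := two_mul_add_one_le_card_of_twoJet hp hr hpd hrd hα hβ hl (hP.symm.trans hPT)
  omega

end RankLowerBound

section ExtremalExample

variable {d : ℕ} {v u : Fin (m + 1) → K}

theorem exists_sum_mul_pow_add_eq_ite [Infinite K] (e n : ℕ) :
    ∃ l s : Fin n → K, ∀ i < n, ∑ j, l j * s j ^ (e + i) = if i = 0 then 1 else 0 := by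
  let s : Fin n ↪ ({0}ᶜ : Set K) :=
    Fin.valEmbedding.trans ((Set.finite_singleton (0 : K)).infinite_compl.natEmbedding _)
  obtain ⟨l, hl⟩ := exists_sum_mul_pow_eq (s := fun j => (s j : K))
    (Subtype.val_injective.comp s.injective) fun i => if (i : ℕ) = 0 then 1 else 0
  refine ⟨fun j => l j / (s j : K) ^ e, fun j => s j, fun i hi => ?_⟩
  rw [← hl ⟨i, hi⟩]
  refine Finset.sum_congr rfl fun j _ => ?_
  rw [pow_add, ← mul_assoc, div_mul_cancel₀ _ (pow_ne_zero e (s j).2)]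

theorem jetCoeff_zero : jetCoeff d v u 0 = nu d v :=
  LinearMap.ext fun f => coeff_zero_restrictLine v u f

theorem jetCoeff_self : jetCoeff d v u d = nu d u :=
  LinearMap.ext fun f => coeff_restrictLine_self v u f.2

theorem jetFunctional_add_single_zero (N : ℕ) (α : ℕ → K) (c : K) :
    jetFunctional d v u (N + 1) (α + Pi.single 0 c) =
      jetFunctional d v u (N + 1) α + c • nu d v := by
  simp [jetFunctional, Finset.sum_range_succ', Pi.single_apply, jetCoeff_zero, add_smul, add_assoc]

theorem exists_jetFunctional_add_smul_nu_mem_dualSpan [Infinite K]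
    (hvu : ∀ t : K, v + t • u ≠ 0) {e : ℕ} (he : e < d) :
    ∃ (α : ℕ → K) (c : K) (T : Finset (Pm K m)), α e = 1 ∧ T.card ≤ d - e ∧
      jetFunctional d v u (e + 1) α + c • nu d u ∈ dualSpan d T := by
  obtain ⟨l, s, hls⟩ := exists_sum_mul_pow_add_eq_ite (K := K) e (d - e)
  obtain ⟨T, hT, hmem⟩ := exists_finset_sum_jetCoeff_mem_dualSpan (d := d) hvu l s
  refine ⟨fun i => ∑ j, l j * s j ^ i, ∑ j, l j * s j ^ d, T, hls 0 (by omega), hT, ?_⟩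
  rw [Finset.sum_range_succ, jetCoeff_self,
    ← Finset.sum_subset (Finset.range_subset_range.2 (Nat.succ_le_of_lt he)) fun i hi hie => ?_]
    at hmem
  · exact hmem
  · rw [Finset.mem_range] at hi hie
    obtain ⟨k, rfl⟩ := Nat.exists_eq_add_of_le (show e ≤ i by omega)
    rw [hls k (by omega), if_neg (by omega), zero_smul]

theorem exists_twoJet_mem_dualSpan [Infinite K] (B : Module.Basis (Fin 3) K (Fin 3 → K))
    {p r : ℕ} (hp : p ≠ 0) (hpd : p < d) (hrd : r < d) :
    ∃ (α β : ℕ → K) (T : Finset (Pm K 2)), α p ≠ 0 ∧ β r ≠ 0 ∧ T.card + p + r ≤ 2 * d + 1 ∧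
      twoJet B d p r α β ∈ dualSpan d T := by
  classical
  obtain ⟨α, c, S, hα, hS, hαS⟩ := exists_jetFunctional_add_smul_nu_mem_dualSpan
    (add_smul_basis_ne_zero (i := 0) (j := 1) (by decide) B) hpd
  obtain ⟨β, c', T, hβ, hT, hβT⟩ := exists_jetFunctional_add_smul_nu_mem_dualSpan
    (add_smul_basis_ne_zero (i := 2) (j := 0) (by decide) B) hrd
  let U : Finset (Pm K 2) := insert (Projectivization.mk K (B 1) (B.ne_zero 1)) (S ∪ T)
  have hU : U.card ≤ S.card + T.card + 1 :=
    (Finset.card_insert_le _ _).trans (Nat.succ_le_succ (Finset.card_union_le _ _))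
  have hB1 : c • nu d (B 1) ∈ dualSpan d U :=
    Submodule.smul_mem _ c (nu_mem_dualSpan (B.ne_zero 1) (by simp [U]))
  have hSU : (S : Set (Pm K 2)) ⊆ U := by intro; simp +contextual [U]
  have hTU : (T : Set (Pm K 2)) ⊆ U := by intro; simp +contextual [U]
  refine ⟨α + Pi.single 0 c', β, U, by simp [hp, hα], by simp [hβ], by omega, ?_⟩
  rw [← Submodule.add_mem_iff_left _ hB1, twoJet, jetFunctional_add_single_zero]
  convert Submodule.add_mem _ (dualSpan_mono hSU hαS) (dualSpan_mono hTU hβT) using 1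
  abel

end ExtremalExample

section MinimalPoints

theorem rep_mk_mem_iff {V : Type*} [AddCommGroup V] [Module K V] {x : V} (hx : x ≠ 0)
    (W : Submodule K V) : (Projectivization.mk K x hx).rep ∈ W ↔ x ∈ W := by
  rw [← submodule_le_iff_rep_mem, Projectivization.submodule_mk,
    Submodule.span_singleton_le_iff_mem]

variable {B : Module.Basis (Fin 3) K (Fin 3 → K)} {d p r : ℕ}

theorem inSpanI_twoJetIdeal_iff {P : PN K 2 d} :
    inSpanI (twoJetIdeal B p r) d P ↔ ∃ α β, P.rep = twoJet B d p r α β :=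
  mem_schemeSpanSub_jetIdeal_inf_iff

theorem brank_eq_and_le_srank_of_minimal [Infinite K] (hp : 2 ≤ p) (hr : r ≠ 0) (hpd : 2 * p ≤ d)
    (hrd : 2 * r + 2 ≤ d) {P : PN K 2 d} (hP : inSpanI (twoJetIdeal B p r) d P)
    (hmin : ∀ A : PSub K 2, twoJetIdeal B p r < A.I → ¬ inSpanI A.I d P) :
    brank d P = p + r + 2 ∧ 2 * d + 1 ≤ srank d P + p + r := by
  obtain ⟨α, β, hP⟩ := inSpanI_twoJetIdeal_iff.1 hP
  obtain ⟨hα, hβ⟩ := ne_zero_of_twoJet_minimal fun A hA h => hmin A hA (by rwa [inSpanI, hP])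
  exact ⟨brank_eq_of_twoJet (by omega) hpd hrd hα hβ hP,
    two_mul_add_one_le_srank_of_twoJet hp hr (by omega) (by omega) hα hβ hP⟩

theorem exists_minimal_srank_eq [Infinite K] (B : Module.Basis (Fin 3) K (Fin 3 → K)) (hp : 2 ≤ p)
    (hr : r ≠ 0) (hpd : 2 * p ≤ d) (hrd : 2 * r + 2 ≤ d) :
    ∃ P : PN K 2 d, inSpanI (twoJetIdeal B p r) d P ∧
      (∀ A : PSub K 2, twoJetIdeal B p r < A.I → ¬ inSpanI A.I d P) ∧
      srank d P + p + r = 2 * d + 1 := by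
  obtain ⟨α, β, T, hα, hβ, hT, hmem⟩ :=
    exists_twoJet_mem_dualSpan (d := d) (p := p) (r := r) B (by omega) (by omega) (by omega)
  have h0 := twoJet_ne_zero (B := B) (d := d) (r := r) (β := β) (by omega) (by omega) hα
  let P : PN K 2 d := Projectivization.mk K (twoJet B d p r α β) h0
  have hspan (I : Ideal (PR K 2)) : inSpanI I d P ↔ twoJet B d p r α β ∈ schemeSpanSub I d :=
    rep_mk_mem_iff h0 _
  have hP : inSpanI (twoJetIdeal B p r) d P :=
    (hspan _).2 (mem_schemeSpanSub_jetIdeal_inf_iff.2 ⟨α, β, rfl⟩)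
  have hmin (A : PSub K 2) (hA : twoJetIdeal B p r < A.I) : ¬ inSpanI A.I d P :=
    (hspan _).not.2 ((twoJet_minimal_iff (by omega) (by omega)).2 ⟨hα, hβ⟩ A hA)
  refine ⟨P, hP, hmin, le_antisymm ?_ (brank_eq_and_le_srank_of_minimal hp hr hpd hrd hP hmin).2⟩
  have : srank d P ≤ T.card := srank_le_card ((rep_mk_mem_iff h0 _).2 hmem)
  omega

theorem inf_eq_twoJetIdeal [IsAlgClosed K] {L₁ L₂ : Set (Pm K 2)} (hL₁ : IsLine L₁)
    (hL₂ : IsLine L₂) {O O₂ : Pm K 2} (hO : L₁ ∩ L₂ = {O}) (hO₂ : O₂ ∈ L₂) (hne : O₂ ≠ O)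
    {A₁ A₂ : PSub K 2} (hA₁ : idealOfSet L₁ ≤ A₁.I) (hA₁O : pzeroLocus A₁.I = {O})
    (hA₁p : idealDeg A₁.I = p + 1) (hA₂ : idealOfSet L₂ ≤ A₂.I) (hA₂O : pzeroLocus A₂.I = {O₂})
    (hA₂r : idealDeg A₂.I = r + 1) : ∃ B, A₁.I ⊓ A₂.I = twoJetIdeal B p r := by
  obtain ⟨B, hB0, hB2, hBL₁, hBL₂⟩ := exists_basis_adapted_to_lines hL₁ hL₂ hO hO₂ hne
  refine ⟨B, congrArg₂ _ ?_ ?_⟩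
  · refine hA₁p ▸ A₁.eq_jetIdeal (by decide) (fun l hl0 hl1 => ?_) hB0.symm hA₁O
    obtain rfl : l = 2 := by revert l; decide
    exact hA₁ hBL₁
  · refine hA₂r ▸ A₂.eq_jetIdeal (by decide) (fun l hl2 hl0 => ?_) hB2.symm hA₂O
    obtain rfl : l = 1 := by revert l; decide
    exact hA₂ hBL₂

end MinimalPoints

theorem stmt9_general [IsAlgClosed K] {n₁ n₂ d : ℕ} (hn₁ : 3 ≤ n₁) (hn₂ : 2 ≤ n₂)
    (hd₁ : 2 * n₁ ≤ d + 2) (hd₂ : 2 * n₂ ≤ d) {L₁ L₂ : Set (Pm K 2)} (hL₁ : IsLine L₁)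
    (hL₂ : IsLine L₂) {O O₂ : Pm K 2} (hO : L₁ ∩ L₂ = {O}) (hO₂ : O₂ ∈ L₂) (hne : O₂ ≠ O)
    {A₁ A₂ : PSub K 2} (hA₁L : idealOfSet L₁ ≤ A₁.I) (hA₁deg : idealDeg A₁.I = n₁)
    (hA₁sup : pzeroLocus A₁.I = {O}) (hA₂L : idealOfSet L₂ ≤ A₂.I)
    (hA₂deg : idealDeg A₂.I = n₂) (hA₂sup : pzeroLocus A₂.I = {O₂}) :
    (∀ P : PN K 2 d, inSpanI (A₁.I ⊓ A₂.I) d P →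
      (∀ A' : PSub K 2, A₁.I ⊓ A₂.I < A'.I → ¬ inSpanI A'.I d P) →
      brank d P = n₁ + n₂ ∧ 2 * d + 3 ≤ srank d P + (n₁ + n₂)) ∧
    ∃ P : PN K 2 d, inSpanI (A₁.I ⊓ A₂.I) d P ∧
      (∀ A' : PSub K 2, A₁.I ⊓ A₂.I < A'.I → ¬ inSpanI A'.I d P) ∧
      srank d P + (n₁ + n₂) = 2 * d + 3 := by
  have : Infinite K := IsAlgClosed.instInfinite
  obtain ⟨p, rfl⟩ := Nat.exists_eq_add_one_of_ne_zero (show n₁ ≠ 0 by omega)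
  obtain ⟨r, rfl⟩ := Nat.exists_eq_add_one_of_ne_zero (show n₂ ≠ 0 by omega)
  obtain ⟨B, hB⟩ := inf_eq_twoJetIdeal hL₁ hL₂ hO hO₂ hne hA₁L hA₁sup hA₁deg hA₂L hA₂sup hA₂deg
  rw [hB]
  constructor
  · intro P hP hmin
    obtain ⟨hbrank, hsrank⟩ :=
      brank_eq_and_le_srank_of_minimal (by omega) (by omega) (by omega) (by omega) hP hmin
    exact ⟨by omega, by omega⟩
  · obtain ⟨P, hP, hmin, hsrank⟩ :=
      exists_minimal_srank_eq (d := d) (p := p) (r := r) B (by omega) (by omega) (by omega)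
        (by omega)
    exact ⟨P, hP, hmin, by omega⟩

end

/-- Lemma 7 (`o2`): in `ℙ^2`, with `w ≥ 2`, `d ≥ 4w+1`, distinct lines `L₁, L₂` meeting at
`O`, `A₁ ⊂ L₁` the degree-`(w+1)` divisor supported at `O`, `A₂ ⊂ L₂` the degree-`w` divisor
supported at `O₂ ∈ L₂ ∖ {O}`, and `A = A₁ ∪ A₂`: every `P ∈ ⟨ν_d(A)⟩` not in the span of any
proper subscheme has `br(P) = 2w+1` and `sr(P) ≥ 2d+2-2w`, and such a `P` with
`sr(P) = 2d+2-2w` exists. -/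
theorem stmt9 (K : Type) [Field K] [IsAlgClosed K] [CharZero K]
    (w d : ℕ) (hw : 2 ≤ w) (hd : 4 * w + 1 ≤ d)
    (L1 L2 : Set (Pm K 2)) (hL1 : IsLine L1) (hL2 : IsLine L2) (hne : L1 ≠ L2)
    (O : Pm K 2) (hO : L1 ∩ L2 = {O})
    (A1 : PSub K 2) (hA1L : idealOfSet L1 ≤ A1.I) (hA1z : IsZeroDimI A1.I)
    (hA1deg : idealDeg A1.I = w + 1) (hA1sup : pzeroLocus A1.I = {O})
    (O2 : Pm K 2) (hO2 : O2 ∈ L2) (hO2O : O2 ≠ O)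
    (A2 : PSub K 2) (hA2L : idealOfSet L2 ≤ A2.I) (hA2z : IsZeroDimI A2.I)
    (hA2deg : idealDeg A2.I = w) (hA2sup : pzeroLocus A2.I = {O2}) :
    (∀ P : PN K 2 d, inSpanI (A1.I ⊓ A2.I) d P →
      (∀ A' : PSub K 2, A1.I ⊓ A2.I < A'.I → ¬ inSpanI A'.I d P) →
      brank d P = 2 * w + 1 ∧ 2 * d + 2 ≤ srank d P + 2 * w) ∧
    ∃ P : PN K 2 d, inSpanI (A1.I ⊓ A2.I) d P ∧
      (∀ A' : PSub K 2, A1.I ⊓ A2.I < A'.I → ¬ inSpanI A'.I d P) ∧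
      srank d P + 2 * w = 2 * d + 2 := by
  simpa only [show w + 1 + w = 2 * w + 1 by omega, ← add_assoc, Nat.add_one_le_add_one_iff,
    Nat.add_right_cancel_iff] using stmt9_general (d := d) (by omega) hw (by omega) (by omega)
      hL1 hL2 hO hO2 hO2O hA1L hA1deg hA1sup hA2L hA2deg hA2sup
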